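/- arXiv:0706.4226 — 4 statements merged into one kernel-verified Lean document; each statement's English description precedes it below -/
import Mathlib

section
/- Let A be an integral domain containing ℚ and let D be a nonzero locally nilpotent derivation of A. Then there exist an algebraically closed field K of characteristic zero and an injective ring homomorphism ι : A → K[S] into the polynomial ring in one variable S over K such that ι ∘ D = ∂_S ∘ ι, where ∂_S is the derivative with respect to S. -/
/-!
For a locally nilpotent derivation `D` of `A`, the exponential `exp (S D) a = ∑ₙ (Dⁿ a / n!) Sⁿ` is
a finite sum and hence a polynomial in `S`, and `exp (S D)` turns `D` into `∂_S`. It is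
multiplicative: `exp (S D) (a b)` and `exp (S D) a * exp (S D) b` have the same constant term, and
by the Leibniz rule their derivatives are sums of expressions of the same kind, so their
coefficients agree by induction on the degree. It is injective because the constant term of
`exp (S D) a` is `a`. The coefficients only require inverses of factorials, so they may be taken in
an algebraic closure of the fraction field of `A`.
-/

open Polynomial
open scoped Nat

/-- A self-map all of whose orbits reach `0`; for a derivation `D` this is local nilpotence. -/
def IsLocallyNilpotent {M : Type*} [Zero M] (f : M → M) : Prop :=
  ∀ a, ∃ n : ℕ, f^[n] a = 0

section Exponential

variable {R A : Type*} (B : Type*) [CommSemiring R] [CommSemiring A] [Algebra R A]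
  [CommSemiring B] [Algebra A B] [Algebra ℚ B] {D : Derivation R A A}

/-- The exponential `exp (S D) a = ∑ₙ (Dⁿ a / n!) Sⁿ` of a locally nilpotent derivation `D`, with
coefficients in an `A`-algebra `B` where factorials are invertible. The chosen summation bound is
immaterial, see `coeff_expPolynomial`. -/
noncomputable def expPolynomial (hD : IsLocallyNilpotent D) (a : A) : B[X] :=
  ∑ n ∈ Finset.range (hD a).choose, monomial n ((n ! : ℚ)⁻¹ • algebraMap A B (D^[n] a))

theorem coeff_expPolynomial (hD : IsLocallyNilpotent D) (a : A) (n : ℕ) :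
    (expPolynomial B hD a).coeff n = (n ! : ℚ)⁻¹ • algebraMap A B (D^[n] a) := by
  simp only [expPolynomial, finsetSum_coeff, coeff_monomial, Finset.sum_ite_eq',
    Finset.mem_range, ite_eq_left_iff, not_lt]
  intro hn
  have iterate_eq_zero : D^[n] a = 0 := by
    rw [← Nat.sub_add_cancel hn, Function.iterate_add_apply, (hD a).choose_spec,
      iterate_map_zero]
  rw [iterate_eq_zero, map_zero, smul_zero]

theorem coeff_zero_expPolynomial (hD : IsLocallyNilpotent D) (a : A) :
    (expPolynomial B hD a).coeff 0 = algebraMap A B a := by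
  simp [coeff_expPolynomial]

theorem derivative_expPolynomial (hD : IsLocallyNilpotent D) (a : A) :
    derivative (expPolynomial B hD a) = expPolynomial B hD (D a) := by
  ext n
  have factorial_cancel : (n + 1 : ℚ) * ((n + 1)! : ℚ)⁻¹ = (n ! : ℚ)⁻¹ := by
    rw [Nat.factorial_succ]
    push_cast
    field_simp
  have cast_eq : (n + 1 : B) = algebraMap ℚ B (n + 1) := by simp
  rw [coeff_derivative, coeff_expPolynomial, coeff_expPolynomial, cast_eq, mul_comm,
    ← Algebra.smul_def, smul_smul, factorial_cancel, Function.iterate_succ_apply]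

theorem expPolynomial_add (hD : IsLocallyNilpotent D) (a b : A) :
    expPolynomial B hD (a + b) = expPolynomial B hD a + expPolynomial B hD b := by
  ext n
  simp only [coeff_add, coeff_expPolynomial, iterate_map_add, map_add, smul_add]

theorem expPolynomial_mul (hD : IsLocallyNilpotent D) (a b : A) :
    expPolynomial B hD (a * b) = expPolynomial B hD a * expPolynomial B hD b := by
  ext n
  induction n generalizing a b with
  | zero => simp only [mul_coeff_zero, coeff_zero_expPolynomial, map_mul]
  | succ n ih =>
    have isUnit_succ : IsUnit (n + 1 : B) := by
      simpa using (IsUnit.mk0 (n + 1 : ℚ) n.cast_add_one_ne_zero).map (algebraMap ℚ B)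
    apply isUnit_succ.mul_right_cancel
    calc
      (expPolynomial B hD (a * b)).coeff (n + 1) * (n + 1)
      _ = (expPolynomial B hD (D a * b) + expPolynomial B hD (a * D b)).coeff n := by
        rw [← coeff_derivative, derivative_expPolynomial, D.leibniz, smul_eq_mul, smul_eq_mul,
          ← expPolynomial_add, add_comm, mul_comm b]
      _ = (derivative (expPolynomial B hD a * expPolynomial B hD b)).coeff n := by
        rw [coeff_add, ih, ih, derivative_mul, derivative_expPolynomial,
          derivative_expPolynomial, coeff_add]
      _ = (expPolynomial B hD a * expPolynomial B hD b).coeff (n + 1) * (n + 1) :=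
        coeff_derivative _ _

theorem expPolynomial_algebraMap [Algebra R B] [IsScalarTower R A B]
    (hD : IsLocallyNilpotent D) (r : R) :
    expPolynomial B hD (algebraMap R A r) = C (algebraMap R B r) := by
  ext n
  cases n with
  | zero =>
    rw [coeff_zero_expPolynomial, coeff_C_zero, ← IsScalarTower.algebraMap_apply]
  | succ n =>
    rw [coeff_expPolynomial, Function.iterate_succ_apply, D.map_algebraMap, iterate_map_zero,
      map_zero, smul_zero, coeff_C_succ]

/-- `expPolynomial` bundled as an algebra homomorphism over the constants `R` of `D`. -/
noncomputable def expAlgHom [Algebra R B] [IsScalarTower R A B] (hD : IsLocallyNilpotent D) :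
    A →ₐ[R] B[X] where
  toFun := expPolynomial B hD
  map_one' := by simpa using expPolynomial_algebraMap B hD 1
  map_mul' := expPolynomial_mul B hD
  map_zero' := by simpa using expPolynomial_algebraMap B hD 0
  map_add' := expPolynomial_add B hD
  commutes' := expPolynomial_algebraMap B hD

theorem expAlgHom_injective [Algebra R B] [IsScalarTower R A B] [FaithfulSMul A B]
    (hD : IsLocallyNilpotent D) : Function.Injective (expAlgHom (R := R) B hD) := by
  intro a b hab
  apply FaithfulSMul.algebraMap_injective A B
  rw [← coeff_zero_expPolynomial B hD a, ← coeff_zero_expPolynomial B hD b]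
  exact congrArg (coeff · 0) hab

theorem expAlgHom_apply_derivation [Algebra R B] [IsScalarTower R A B]
    (hD : IsLocallyNilpotent D) (a : A) :
    expAlgHom B hD (D a) = derivative (expAlgHom B hD a) :=
  (derivative_expPolynomial B hD a).symm

end Exponential

theorem stmt5_general {A : Type u} [CommRing A] [IsDomain A] [CharZero A]
    (D : Derivation ℤ A A) (hD : IsLocallyNilpotent D) :
    ∃ (K : Type u) (_ : Field K) (_ : IsAlgClosed K) (_ : CharZero K) (ι : A →+* K[X]),
      Function.Injective ι ∧ ∀ a : A, ι (D a) = derivative (ι a) := by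
  let K := AlgebraicClosure (FractionRing A)
  have faithful : FaithfulSMul A K := FaithfulSMul.trans A (FractionRing A) K
  exact ⟨K, inferInstance, inferInstance, inferInstance, expAlgHom K hD,
    expAlgHom_injective K hD, expAlgHom_apply_derivation K hD⟩

/-- Let `A` be an integral domain containing `ℚ` and let `D` be a nonzero locally nilpotent
derivation of `A`.  Then there exist an algebraically closed field `K` of characteristic zero
and an injective ring homomorphism `ι : A → K[S]` into the polynomial ring in one variable
over `K` such that `ι ∘ D = ∂_S ∘ ι`. -/
theorem stmt5 {A : Type u} [CommRing A] [IsDomain A] [Algebra ℚ A]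
    (D : Derivation ℤ A A) (hD : D ≠ 0) (hln : ∀ a : A, ∃ n : ℕ, (⇑D)^[n] a = 0) :
    ∃ (K : Type u) (_ : Field K) (_ : IsAlgClosed K) (_ : CharZero K)
      (ι : A →+* Polynomial K),
        Function.Injective ι ∧ ∀ a : A, ι (D a) = Polynomial.derivative (ι a) := by
  have : CharZero A := algebraRat.charZero A
  exact stmt5_general D hln
end

section
/- Let R be an affine ℂ-algebra that is a unique factorization domain with R* = ℂ*, and let r, s ∈ R be nonzero elements sharing no common factor such that the ideal (r, s) is a proper ideal of R. Let A_{r,s} := R[U,V]/(rU − sV − 1) and assume ML(A_{r,s}) = R. Then the group Aut_R(A_{r,s}) of R-algebra automorphisms of A_{r,s} consists exactly of the maps sending (u, v) to (u + ts, v + tr) for t ∈ R (i.e. the exponentials exp(tE)); consequently Aut_R(A_{r,s}) is isomorphic as a group to the additive group (R, +). -/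
open MvPolynomial

/-- A derivation of a commutative ring is locally nilpotent if each element is annihilated
by some iterate of the derivation. -/
def IsLND {B : Type u} [CommRing B] (D : Derivation ℤ B B) : Prop :=
  ∀ b : B, ∃ n : ℕ, (⇑D)^[n] b = 0

/-- The Makar-Limanov invariant of a commutative ring: the intersection of the kernels of
all locally nilpotent derivations. -/
def ML (B : Type) [CommRing B] : Set B :=
  {b : B | ∀ D : Derivation ℤ B B, IsLND D → D b = 0}

/-- `A_{r,s} = R[U,V]/(rU − sV − 1)`. -/
noncomputable abbrev Ars (R : Type) [CommRing R] (r s : R) : Type :=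
  MvPolynomial (Fin 2) R ⧸ Ideal.span {(C r * X 0 - C s * X 1 - 1 : MvPolynomial (Fin 2) R)}

/-- `u`, the image of `U` in `A_{r,s}`. -/
noncomputable def uu (R : Type) [CommRing R] (r s : R) : Ars R r s := Ideal.Quotient.mk _ (X 0)

/-- `v`, the image of `V` in `A_{r,s}`. -/
noncomputable def vv (R : Type) [CommRing R] (r s : R) : Ars R r s := Ideal.Quotient.mk _ (X 1)

/-!
Inverting `s` turns `A = A_{r,s}` into `R_s[u]`, so `A` is an `R`-subalgebra of `K[X]`, where
`K = Frac R`, via `u ↦ X` and `v ↦ (rX - 1) / s`. When `r` is regular modulo `s`, the ring `R / s`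
embeds into `A / sA = (R / s)_r[v]`, which gives `sA ∩ R = sR` and then `A ∩ K = R`.

An `R`-automorphism `φ` of `A` sends `u` to an element of degree one of `K[X]`. Comparing `φ u` with
its translate by `exp E`, and using `r φ(u) - s φ(v) = 1`, one finds that the leading coefficient
`a` lies in `R`, whence `φ u = a u + b` and `φ v = a v + b'` with `a + r b - s b' = 1`. So `a` is a
unit congruent to `1` modulo `(r, s)`. If `a = 1`, then `r b = s b'` forces `(b, b') = (ts, tr)`.
-/

section ConstantCoeff

open nonZeroDivisors

variable {σ R : Type*} [CommRing R] {f : MvPolynomial σ R}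

theorem mem_nonZeroDivisors_of_isUnit_constantCoeff (hf : IsUnit (constantCoeff f)) :
    f ∈ (MvPolynomial σ R)⁰ := by
  -- `f` becomes invertible as a power series.
  have hunit : IsUnit (coeToMvPowerSeries.ringHom f : MvPowerSeries σ R) :=
    MvPowerSeries.isUnit_iff_constantCoeff.2 hf
  exact mem_nonZeroDivisors_of_injective (f := coeToMvPowerSeries.ringHom)
    (coe_injective σ R) hunit.mem_nonZeroDivisors

theorem C_dvd_of_C_dvd_mul_of_isUnit_constantCoeff (hf : IsUnit (constantCoeff f)) {c : R}
    {g : MvPolynomial σ R} (h : C c ∣ f * g) : C c ∣ g := by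
  have hmk (x : R) : Ideal.Quotient.mk (Ideal.span {c}) x = 0 ↔ c ∣ x := by
    rw [Ideal.Quotient.eq_zero_iff_mem, Ideal.mem_span_singleton]
  rw [C_dvd_iff_map_hom_eq_zero _ _ hmk] at h ⊢
  rw [map_mul] at h
  refine (mem_nonZeroDivisors_of_isUnit_constantCoeff ?_).1 _ h
  rw [constantCoeff_map]
  exact hf.map _

theorem isSMulRegular_quotient_span_of_isUnit_constantCoeff (hf : IsUnit (constantCoeff f)) {c : R}
    (hc : c ∈ R⁰) : IsSMulRegular (MvPolynomial σ R ⧸ Ideal.span {f}) c := by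
  refine isSMulRegular_iff_right_eq_zero_of_smul.2 fun x hx ↦ ?_
  obtain ⟨p, rfl⟩ := Ideal.Quotient.mk_surjective x
  have hmem : C c * p ∈ Ideal.span {f} := by
    rwa [← Ideal.Quotient.eq_zero_iff_mem, ← smul_eq_C_mul]
  obtain ⟨g, hg⟩ := Ideal.mem_span_singleton.1 hmem
  obtain ⟨q, rfl⟩ := C_dvd_of_C_dvd_mul_of_isUnit_constantCoeff hf ⟨p, hg.symm⟩
  have hreg : IsSMulRegular (MvPolynomial σ R) c := fun a b hab ↦ MvPolynomial.ext _ _ fun m ↦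
    (mul_cancel_left_mem_nonZeroDivisors hc).1 (by simpa using congrArg (coeff m) hab)
  have hp : p = f * q := hreg (by simpa only [smul_eq_C_mul, mul_left_comm] using hg)
  exact Ideal.Quotient.eq_zero_iff_mem.2 (Ideal.mem_span_singleton.2 ⟨q, hp⟩)

end ConstantCoeff

namespace Ars

section CommRing

variable {R : Type} [CommRing R] {r s : R}

-- The scalar action of the quotient ring matches `Algebra.toSMul` only after unfolding, which keeps
-- `rw` from applying `Algebra.smul_def` directly.
theorem smul_eq_algebraMap_mul (a : R) (x : Ars R r s) :
    a • x = algebraMap R (Ars R r s) a * x :=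
  Algebra.smul_def a x

theorem smul_uu_sub_smul_vv (r s : R) : r • uu R r s - s • vv R r s = 1 :=
  Ideal.Quotient.eq.2 <| by
    simp only [smul_eq_C_mul]
    exact Ideal.mem_span_singleton_self _

/-- The universal property of `A_{r,s}`: the `R`-algebra homomorphism `u ↦ x`, `v ↦ y` attached to a
solution of `r x - s y = 1`. -/
noncomputable def lift {B : Type*} [CommRing B] [Algebra R B] (x y : B) (h : r • x - s • y = 1) :
    Ars R r s →ₐ[R] B :=
  Ideal.Quotient.liftₐ _ (aeval ![x, y]) fun p hp ↦ by
    obtain ⟨q, rfl⟩ := Ideal.mem_span_singleton.1 hp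
    simp [← Algebra.smul_def, h]

section Lift

variable {B : Type*} [CommRing B] [Algebra R B]

@[simp]
theorem lift_uu (x y : B) (h : r • x - s • y = 1) : lift x y h (uu R r s) = x :=
  aeval_X ![x, y] 0

@[simp]
theorem lift_vv (x y : B) (h : r • x - s • y = 1) : lift x y h (vv R r s) = y :=
  aeval_X ![x, y] 1

theorem algHom_ext {f g : Ars R r s →ₐ[R] B} (hu : f (uu R r s) = g (uu R r s))
    (hv : f (vv R r s) = g (vv R r s)) : f = g :=
  Ideal.Quotient.algHom_ext _ <| MvPolynomial.algHom_ext <| Fin.forall_fin_two.2 ⟨hu, hv⟩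

end Lift

theorem isSMulRegular_of_mem_nonZeroDivisors {c : R} (hc : c ∈ nonZeroDivisors R) :
    IsSMulRegular (Ars R r s) c :=
  isSMulRegular_quotient_span_of_isUnit_constantCoeff (by simp) hc

theorem exists_pow_smul_eq_aeval_uu (x : Ars R r s) :
    ∃ (n : ℕ) (p : Polynomial R), s ^ n • x = Polynomial.aeval (uu R r s) p := by
  obtain ⟨f, rfl⟩ := Ideal.Quotient.mk_surjective x
  induction f using MvPolynomial.induction_on with
  | C a => exact ⟨0, Polynomial.C a, by rw [pow_zero, one_smul, Polynomial.aeval_C]; rfl⟩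
  | add f g hf hg =>
    obtain ⟨n, p, hp⟩ := hf
    obtain ⟨m, q, hq⟩ := hg
    refine ⟨n + m, s ^ m • p + s ^ n • q, ?_⟩
    rw [map_add, map_add, map_smul, map_smul, ← hp, ← hq, smul_add, smul_smul, smul_smul,
      pow_add, mul_comm (s ^ m)]
  | mul_X f i hf =>
    obtain ⟨n, p, hp⟩ := hf
    rw [map_mul]
    obtain rfl | rfl : i = 0 ∨ i = 1 := by lia
    · exact ⟨n, p * Polynomial.X, by rw [map_mul, ← hp, Polynomial.aeval_X, smul_mul_assoc]; rfl⟩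
    · refine ⟨n + 1, p * (r • Polynomial.X - 1), ?_⟩
      have hv : Polynomial.aeval (uu R r s) (r • Polynomial.X - 1 : Polynomial R) =
          s • vv R r s := by
        rw [map_sub, map_smul, Polynomial.aeval_X, map_one, ← smul_uu_sub_smul_vv r s,
          sub_sub_cancel]
      rw [map_mul, ← hp, hv, pow_succ, mul_smul, smul_mul_smul_comm, ← mul_smul]
      rfl

theorem dvd_of_smul_eq_algebraMap (hrs : ∀ x, s ∣ r * x → s ∣ x) {x : Ars R r s} {c : R}
    (h : s • x = algebraMap R (Ars R r s) c) : s ∣ c := by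
  let Q := R ⧸ Ideal.span {s}
  let L := Localization.Away (algebraMap R Q r)
  have hmk (a : R) : algebraMap R Q a = 0 ↔ s ∣ a := by
    rw [Ideal.Quotient.algebraMap_eq, Ideal.Quotient.eq_zero_iff_mem, Ideal.mem_span_singleton]
  have hr : algebraMap R Q r ∈ nonZeroDivisors Q := by
    refine mem_nonZeroDivisors_iff_right.2 fun y hy ↦ ?_
    obtain ⟨a, rfl⟩ := Ideal.Quotient.mk_surjective y
    exact (hmk a).2 (hrs a ((hmk (r * a)).1 (by rw [map_mul, mul_comm]; exact hy)))
  have hinj : Function.Injective (algebraMap Q L) :=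
    IsLocalization.injective L (Submonoid.powers_le.2 hr)
  have hinv : r • (IsLocalization.Away.invSelf (algebraMap R Q r) : L) - s • (0 : L) = 1 := by
    rw [smul_zero, sub_zero, Algebra.smul_def, IsScalarTower.algebraMap_apply R Q L,
      IsLocalization.Away.mul_invSelf]
  have hs : algebraMap R L s = 0 := by
    rw [IsScalarTower.algebraMap_apply R Q L, (hmk s).2 dvd_rfl, map_zero]
  have hc := congrArg (lift _ _ hinv) h
  rw [map_smul, AlgHom.commutes, Algebra.smul_def, hs, zero_mul,
    IsScalarTower.algebraMap_apply R Q L] at hc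
  exact (hmk c).1 (hinj (hc.symm.trans (map_zero _).symm))

theorem mem_range_of_pow_smul_eq_algebraMap (hs : s ∈ nonZeroDivisors R)
    (hrs : ∀ x, s ∣ r * x → s ∣ x) {n : ℕ} {x : Ars R r s} {c : R}
    (h : s ^ n • x = algebraMap R (Ars R r s) c) : x ∈ Set.range (algebraMap R (Ars R r s)) := by
  induction n generalizing c with
  | zero => exact ⟨c, by rw [← h, pow_zero, one_smul]⟩
  | succ n ih =>
    rw [pow_succ', mul_smul] at h
    obtain ⟨d, rfl⟩ := dvd_of_smul_eq_algebraMap hrs h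
    have hd : s • s ^ n • x = s • algebraMap R (Ars R r s) d := by
      rw [h, map_mul, smul_eq_algebraMap_mul]
    exact ih (isSMulRegular_of_mem_nonZeroDivisors hs hd)

theorem smul_translate_sub (r s t : R) :
    r • (uu R r s + algebraMap R (Ars R r s) (t * s))
      - s • (vv R r s + algebraMap R (Ars R r s) (t * r)) = 1 := by
  rw [← smul_uu_sub_smul_vv r s]
  simp only [smul_eq_algebraMap_mul, map_mul]
  ring

/-- The one-parameter group `t ↦ exp(tE)` of automorphisms of `A_{r,s}`, given by `u ↦ u + ts` and
`v ↦ v + tr`. The group of parameters `(R, +)` is written multiplicatively. -/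
noncomputable def translate (r s : R) : Multiplicative R →* (Ars R r s ≃ₐ[R] Ars R r s) :=
  (AlgEquiv.algHomUnitsEquiv R (Ars R r s)).toMonoidHom.comp <| MonoidHom.toHomUnits
    { toFun t := lift _ _ (smul_translate_sub r s t.toAdd)
      map_one' := algHom_ext (by simp) (by simp)
      map_mul' t t' := algHom_ext
        (by
          simp only [toAdd_mul, add_mul, map_add, map_mul, lift_uu, AlgHom.mul_apply,
            AlgHom.commutes]
          ring)
        (by
          simp only [toAdd_mul, add_mul, map_add, map_mul, lift_vv, AlgHom.mul_apply,
            AlgHom.commutes]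
          ring) }

@[simp]
theorem translate_uu (t : R) : translate r s (.ofAdd t) (uu R r s) =
    uu R r s + algebraMap R (Ars R r s) (t * s) :=
  lift_uu _ _ (smul_translate_sub r s t)

@[simp]
theorem translate_vv (t : R) : translate r s (.ofAdd t) (vv R r s) =
    vv R r s + algebraMap R (Ars R r s) (t * r) :=
  lift_vv _ _ (smul_translate_sub r s t)

end CommRing

section IsDomain

open Polynomial (taylor natDegree)

variable {R : Type} [CommRing R] [IsDomain R] {r s : R}

/-- The homomorphism `u ↦ X`, `v ↦ (rX - 1) / s` of `A_{r,s}` into the polynomial ring over the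
fraction field of `R`. -/
noncomputable def toPolynomial (r : R) (hs : s ≠ 0) :
    Ars R r s →ₐ[R] Polynomial (FractionRing R) :=
  lift Polynomial.X
    (Polynomial.C (algebraMap R (FractionRing R) s)⁻¹ * (r • Polynomial.X - 1)) <| by
      have hs' : algebraMap R (FractionRing R) s ≠ 0 := by simpa using hs
      rw [Algebra.smul_def s, Polynomial.algebraMap_apply, ← mul_assoc, ← Polynomial.C_mul,
        mul_inv_cancel₀ hs', Polynomial.C_1, one_mul, sub_sub_cancel]

@[simp]
theorem toPolynomial_uu (hs : s ≠ 0) : toPolynomial r hs (uu R r s) = Polynomial.X :=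
  lift_uu ..

@[simp]
theorem toPolynomial_vv (hs : s ≠ 0) : toPolynomial r hs (vv R r s) =
    Polynomial.C (algebraMap R (FractionRing R) s)⁻¹ * (r • Polynomial.X - 1) :=
  lift_vv ..

@[simp]
theorem toPolynomial_algebraMap (hs : s ≠ 0) (a : R) :
    toPolynomial r hs (algebraMap R (Ars R r s) a) =
      Polynomial.C (algebraMap R (FractionRing R) a) := by
  rw [AlgHom.commutes, Polynomial.algebraMap_apply]

theorem toPolynomial_aeval_uu (hs : s ≠ 0) (p : Polynomial R) :
    toPolynomial r hs (Polynomial.aeval (uu R r s) p) =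
      p.map (algebraMap R (FractionRing R)) := by
  rw [← Polynomial.aeval_algHom_apply, toPolynomial_uu, Polynomial.aeval_X_left_eq_map]

theorem algebraMap_injective (hs : s ≠ 0) : Function.Injective (algebraMap R (Ars R r s)) := by
  refine .of_comp (f := toPolynomial r hs) ?_
  simpa [Function.comp_def] using
    Polynomial.C_injective.comp (IsFractionRing.injective R (FractionRing R))

theorem smul_uu_add_algebraMap_inj (hs : s ≠ 0) {a b c d : R}
    (h : a • uu R r s + algebraMap R (Ars R r s) b = c • uu R r s + algebraMap R (Ars R r s) d) :
    a = c ∧ b = d := by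
  have hX := congrArg (toPolynomial r hs) h
  simp only [map_add, map_smul, toPolynomial_uu, toPolynomial_algebraMap] at hX
  have hinj := IsFractionRing.injective R (FractionRing R)
  constructor
  · exact hinj (by simpa [Algebra.smul_def] using congrArg (Polynomial.coeff · 1) hX)
  · exact hinj (by simpa using congrArg (Polynomial.coeff · 0) hX)

theorem mem_range_of_toPolynomial_eq_C (hs : s ≠ 0) (hrs : ∀ x, s ∣ r * x → s ∣ x)
    {x : Ars R r s} {k : FractionRing R} (hx : toPolynomial r hs x = Polynomial.C k) :
    x ∈ Set.range (algebraMap R (Ars R r s)) := by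
  obtain ⟨n, p, hp⟩ := exists_pow_smul_eq_aeval_uu x
  have hmap : p.map (algebraMap R (FractionRing R)) = Polynomial.C (s ^ n • k) := by
    rw [← toPolynomial_aeval_uu (r := r) hs, ← hp, map_smul, hx, Polynomial.smul_C]
  have hdeg : p.natDegree = 0 := by
    rw [← Polynomial.natDegree_map_eq_of_injective (IsFractionRing.injective R (FractionRing R)),
      hmap, Polynomial.natDegree_C]
  rw [Polynomial.eq_C_of_natDegree_eq_zero hdeg, Polynomial.aeval_C] at hp
  exact mem_range_of_pow_smul_eq_algebraMap (mem_nonZeroDivisors_of_ne_zero hs) hrs hp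

theorem toPolynomial_translate (hs : s ≠ 0) (t : R) (x : Ars R r s) :
    toPolynomial r hs (translate r s (.ofAdd t) x) =
      taylor (algebraMap R (FractionRing R) (t * s)) (toPolynomial r hs x) := by
  let T := (Polynomial.taylorAlgHom (algebraMap R (FractionRing R) (t * s))).restrictScalars R
  suffices h : (toPolynomial r hs).comp (translate r s (.ofAdd t)).toAlgHom =
      T.comp (toPolynomial r hs) from DFunLike.congr_fun h x
  refine algHom_ext ?_ ?_
  · simp [T]
  · have hs' : algebraMap R (FractionRing R) s ≠ 0 := by simpa using hs
    have hinv : Polynomial.C (algebraMap R (FractionRing R) s)⁻¹ *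
        Polynomial.C (algebraMap R (FractionRing R) s) = 1 := by
      rw [← Polynomial.C_mul, inv_mul_cancel₀ hs', Polynomial.C_1]
    simp only [T, AlgHom.coe_comp, Function.comp_apply, AlgEquiv.coe_toAlgHom,
      AlgHom.coe_restrictScalars', Polynomial.taylorAlgHom_apply, translate_vv, toPolynomial_vv,
      toPolynomial_algebraMap, Algebra.smul_def, Polynomial.algebraMap_apply, map_add, map_sub,
      map_mul, map_one, Polynomial.taylor_C, Polynomial.taylor_X]
    linear_combination -(Polynomial.C (algebraMap R (FractionRing R) t) *
      Polynomial.C (algebraMap R (FractionRing R) r)) * hinv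

theorem natDegree_toPolynomial_apply_uu (hs : s ≠ 0) (φ : Ars R r s ≃ₐ[R] Ars R r s) :
    (toPolynomial r hs (φ (uu R r s))).natDegree = 1 := by
  obtain ⟨n, q, hq⟩ := exists_pow_smul_eq_aeval_uu (φ.symm (uu R r s))
  have hX : s ^ n • Polynomial.X =
      (q.map (algebraMap R (FractionRing R))).comp (toPolynomial r hs (φ (uu R r s))) := by
    calc s ^ n • Polynomial.X = toPolynomial r hs (φ (s ^ n • φ.symm (uu R r s))) := by
          rw [map_smul, map_smul, φ.apply_symm_apply, toPolynomial_uu]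
      _ = Polynomial.aeval (toPolynomial r hs (φ (uu R r s))) q := by
          rw [hq, ← AlgEquiv.coe_toAlgHom φ, ← Polynomial.aeval_algHom_apply,
            ← Polynomial.aeval_algHom_apply]
      _ = _ := by rw [Polynomial.comp, Polynomial.eval₂_map]; rfl
  have hdeg := congrArg natDegree hX
  rw [Polynomial.natDegree_comp, Polynomial.natDegree_smul _ (pow_ne_zero n hs),
    Polynomial.natDegree_X] at hdeg
  exact Nat.eq_one_of_mul_eq_one_left hdeg.symm

theorem exists_algebraMap_eq_of_toPolynomial_eq (hs : s ≠ 0) (hrs : ∀ x, s ∣ r * x → s ∣ x)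
    {x y : Ars R r s} (hxy : r • x - s • y = 1) {c d : FractionRing R}
    (hx : toPolynomial r hs x = Polynomial.C c * Polynomial.X + Polynomial.C d) :
    ∃ a : R, algebraMap R (FractionRing R) a = c := by
  set τ := translate r s (.ofAdd 1)
  have hτx : toPolynomial r hs (τ x - x) = Polynomial.C (c * algebraMap R (FractionRing R) s) := by
    rw [map_sub, toPolynomial_translate, hx]
    simp only [map_add, map_mul, one_mul, Polynomial.taylor_mul, Polynomial.taylor_C,
      Polynomial.taylor_X]
    ring
  obtain ⟨e, he⟩ := mem_range_of_toPolynomial_eq_C hs hrs hτx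
  have hτy : s • (τ y - y) = algebraMap R (Ars R r s) (r * e) := by
    have hτxy := congrArg τ hxy
    rw [map_sub, map_smul, map_smul, map_one] at hτxy
    rw [map_mul, he, ← smul_eq_algebraMap_mul, smul_sub, smul_sub]
    linear_combination hxy - hτxy
  obtain ⟨a, rfl⟩ := hrs e (dvd_of_smul_eq_algebraMap hrs hτy)
  refine ⟨a, ?_⟩
  rw [← he, toPolynomial_algebraMap, map_mul, mul_comm c] at hτx
  have hs' : algebraMap R (FractionRing R) s ≠ 0 := by simpa using hs
  exact mul_left_cancel₀ hs' (Polynomial.C_injective hτx)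

theorem exists_apply_eq_smul_add (hs : s ≠ 0) (hrs : ∀ x, s ∣ r * x → s ∣ x)
    (φ : Ars R r s ≃ₐ[R] Ars R r s) :
    ∃ a b b' : R, φ (uu R r s) = a • uu R r s + algebraMap R (Ars R r s) b ∧
      φ (vv R r s) = a • vv R r s + algebraMap R (Ars R r s) b' ∧ a + r * b - s * b' = 1 := by
  have hφ : r • φ (uu R r s) - s • φ (vv R r s) = 1 := by
    rw [← map_smul, ← map_smul, ← map_sub, smul_uu_sub_smul_vv, map_one]
  obtain ⟨c, d, hcd⟩ := Polynomial.exists_eq_X_add_C_of_natDegree_le_one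
    (natDegree_toPolynomial_apply_uu hs φ).le
  obtain ⟨a, rfl⟩ := exists_algebraMap_eq_of_toPolynomial_eq hs hrs hφ hcd
  obtain ⟨b, hb⟩ : φ (uu R r s) - a • uu R r s ∈ Set.range (algebraMap R (Ars R r s)) := by
    refine mem_range_of_toPolynomial_eq_C hs hrs (k := d) ?_
    rw [map_sub, map_smul, toPolynomial_uu, hcd, Algebra.smul_def, Polynomial.algebraMap_apply,
      add_sub_cancel_left]
  have hv : s • (φ (vv R r s) - a • vv R r s) = algebraMap R (Ars R r s) (a + r * b - 1) := by
    have hrel := smul_uu_sub_smul_vv r s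
    simp only [smul_eq_algebraMap_mul, map_sub, map_add, map_mul, map_one] at hφ hrel hb ⊢
    linear_combination algebraMap R (Ars R r s) a * hrel - hφ - algebraMap R (Ars R r s) r * hb
  obtain ⟨b', hb'⟩ := mem_range_of_pow_smul_eq_algebraMap (n := 1)
    (mem_nonZeroDivisors_of_ne_zero hs) hrs (by rwa [pow_one])
  refine ⟨a, b, b', eq_add_of_sub_eq' hb.symm, eq_add_of_sub_eq' hb'.symm, ?_⟩
  rw [← hb', smul_eq_algebraMap_mul, ← map_mul] at hv
  linear_combination -algebraMap_injective hs hv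

theorem isUnit_of_apply_uu_eq (hs : s ≠ 0) (hrs : ∀ x, s ∣ r * x → s ∣ x)
    {φ : Ars R r s ≃ₐ[R] Ars R r s} {a b : R}
    (hφ : φ (uu R r s) = a • uu R r s + algebraMap R (Ars R r s) b) : IsUnit a := by
  obtain ⟨c, d, -, hsymm, -⟩ := exists_apply_eq_smul_add hs hrs φ.symm
  have hu : (1 : R) • uu R r s + algebraMap R (Ars R r s) 0 =
      (c * a) • uu R r s + algebraMap R (Ars R r s) (c * b + d) := by
    have h := congrArg φ hsymm
    rw [φ.apply_symm_apply, map_add, map_smul, hφ, AlgEquiv.commutes] at h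
    rw [one_smul, map_zero, add_zero, map_add, map_mul, mul_smul, ← smul_eq_algebraMap_mul,
      ← add_assoc, ← smul_add]
    exact h
  exact .of_mul_eq_one_right c (smul_uu_add_algebraMap_inj hs hu).1.symm

theorem translate_injective (hs : s ≠ 0) : Function.Injective (translate r s) := by
  intro t t' h
  have hu : uu R r s + algebraMap R (Ars R r s) (t.toAdd * s) =
      uu R r s + algebraMap R (Ars R r s) (t'.toAdd * s) := by
    rw [← translate_uu, ← translate_uu, ofAdd_toAdd, ofAdd_toAdd, h]
  exact Multiplicative.toAdd.injective
    (mul_right_cancel₀ hs (algebraMap_injective hs (add_left_cancel hu)))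

theorem translate_surjective (hs : s ≠ 0) (hrs : ∀ x, s ∣ r * x → s ∣ x)
    (hunit : ∀ a : R, IsUnit a → a - 1 ∈ Ideal.span {r, s} → a = 1) :
    Function.Surjective (translate r s) := by
  intro φ
  obtain ⟨a, b, b', hu, hv, hab⟩ := exists_apply_eq_smul_add hs hrs φ
  have hmem : a - 1 ∈ Ideal.span {r, s} :=
    Ideal.mem_span_pair.2 ⟨-b, b', by linear_combination -hab⟩
  obtain rfl := hunit a (isUnit_of_apply_uu_eq hs hrs hu) hmem
  have hrb : r * b = s * b' := by linear_combination hab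
  obtain ⟨t, rfl⟩ := hrs b ⟨b', hrb⟩
  obtain rfl : b' = t * r := mul_left_cancel₀ hs (by rw [← hrb]; ring)
  refine ⟨.ofAdd t, AlgEquiv.coe_toAlgHom_injective (algHom_ext ?_ ?_)⟩
  · exact (translate_uu t).trans (by rw [AlgEquiv.coe_toAlgHom, hu, one_smul, mul_comm s t])
  · exact (translate_vv t).trans (by rw [AlgEquiv.coe_toAlgHom, hv, one_smul])

end IsDomain

end Ars

theorem eq_one_of_isUnit_of_sub_one_mem {k R : Type*} [Field k] [CommRing R] [Algebra k R]
    (hk : ∀ ρ : R, IsUnit ρ → ∃ c : k, algebraMap k R c = ρ) {I : Ideal R} (hI : I ≠ ⊤) {a : R}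
    (ha : IsUnit a) (haI : a - 1 ∈ I) : a = 1 := by
  obtain ⟨c, rfl⟩ := hk a ha
  by_contra hne
  have hc : c - 1 ≠ 0 := sub_ne_zero.2 fun h ↦ hne (by rw [h, map_one])
  refine hI (I.eq_top_of_isUnit_mem haI ?_)
  rw [← map_one (algebraMap k R), ← map_sub]
  exact (isUnit_iff_ne_zero.2 hc).map _

theorem stmt12_general {R : Type} [CommRing R] [IsDomain R] (r s : R) (hs : s ≠ 0)
    (hrs : ∀ x, s ∣ r * x → s ∣ x)
    (hunit : ∀ a : R, IsUnit a → a - 1 ∈ Ideal.span {r, s} → a = 1) :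
    (∀ φ : Ars R r s ≃ₐ[R] Ars R r s, ∃ t : R,
        φ (uu R r s) = uu R r s + algebraMap R (Ars R r s) (t * s) ∧
        φ (vv R r s) = vv R r s + algebraMap R (Ars R r s) (t * r)) ∧
    (∀ t : R, ∃ φ : Ars R r s ≃ₐ[R] Ars R r s,
        φ (uu R r s) = uu R r s + algebraMap R (Ars R r s) (t * s) ∧
        φ (vv R r s) = vv R r s + algebraMap R (Ars R r s) (t * r)) ∧
    Nonempty ((Ars R r s ≃ₐ[R] Ars R r s) ≃* Multiplicative R) := by
  have hsurj := Ars.translate_surjective hs hrs hunit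
  refine ⟨fun φ ↦ ?_, fun t ↦ ⟨Ars.translate r s (.ofAdd t), Ars.translate_uu t,
    Ars.translate_vv t⟩, ⟨(MulEquiv.ofBijective _ ⟨Ars.translate_injective hs, hsurj⟩).symm⟩⟩
  obtain ⟨t, rfl⟩ := hsurj φ
  exact ⟨t.toAdd, Ars.translate_uu _, Ars.translate_vv _⟩

/-- Let `R` be an affine `ℂ`-algebra UFD with `R* = ℂ*`, and let `r, s ∈ R` be nonzero,
without common factor, generating a proper ideal.  Assume `ML(A_{r,s}) = R`.  Then the
`R`-algebra automorphisms of `A_{r,s}` are exactly the maps `(u,v) ↦ (u + ts, v + tr)`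
(`= exp(tE)`) for `t ∈ R`; consequently `Aut_R(A_{r,s})` is isomorphic as a group to the
additive group `(R, +)`. -/
theorem stmt12 {R : Type} [CommRing R] [IsDomain R] [Algebra ℂ R] [Algebra.FiniteType ℂ R]
    [UniqueFactorizationMonoid R]
    (hRunits : ∀ ρ : R, IsUnit ρ ↔ ∃ c : ℂ, c ≠ 0 ∧ algebraMap ℂ R c = ρ)
    (r s : R) (hr : r ≠ 0) (hs : s ≠ 0)
    (hcop : ∀ d : R, d ∣ r → d ∣ s → IsUnit d)
    (hproper : Ideal.span {r, s} ≠ (⊤ : Ideal R))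
    (hML : ML (Ars R r s) = Set.range (algebraMap R (Ars R r s))) :
    (∀ φ : Ars R r s ≃ₐ[R] Ars R r s, ∃ t : R,
        φ (uu R r s) = uu R r s + algebraMap R (Ars R r s) (t * s) ∧
        φ (vv R r s) = vv R r s + algebraMap R (Ars R r s) (t * r)) ∧
    (∀ t : R, ∃ φ : Ars R r s ≃ₐ[R] Ars R r s,
        φ (uu R r s) = uu R r s + algebraMap R (Ars R r s) (t * s) ∧
        φ (vv R r s) = vv R r s + algebraMap R (Ars R r s) (t * r)) ∧
    Nonempty ((Ars R r s ≃ₐ[R] Ars R r s) ≃* Multiplicative R) := by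
  have hsr : IsRelPrime s r := fun d hds hdr ↦ hcop d hdr hds
  exact stmt12_general r s hs (fun _ ↦ hsr.dvd_of_dvd_mul_left) fun a ↦
    eq_one_of_isUnit_of_sub_one_mem (fun ρ hρ ↦ ((hRunits ρ).1 hρ).imp fun _ ↦ And.right) hproper
end

section
/- Let R := ℂ[X,Y,Z]/(X² + Y³ + Z⁷) with x, y, z the images of X, Y, Z. Then every ℂ-algebra automorphism of R sends (x, y, z) to (λx, μy, νz) for some nonzero scalars λ, μ, ν ∈ ℂ. -/
open MvPolynomial

/-- `R = ℂ[X,Y,Z]/(X² + Y³ + Z⁷)`. -/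
noncomputable abbrev Rring : Type :=
  MvPolynomial (Fin 3) ℂ ⧸ Ideal.span {((X 0) ^ 2 + (X 1) ^ 3 + (X 2) ^ 7 : MvPolynomial (Fin 3) ℂ)}

/-- `x`, the image of `X` in `R`. -/
noncomputable def xx : Rring := Ideal.Quotient.mk _ (X 0)

/-- `y`, the image of `Y` in `R`. -/
noncomputable def yy : Rring := Ideal.Quotient.mk _ (X 1)

/-- `z`, the image of `Z` in `R`. -/
noncomputable def zz : Rring := Ideal.Quotient.mk _ (X 2)

/-!
Pairwise coprime exponents `a`, `b`, `c` with `1/a + 1/b + 1/c < 1` replace `2`, `3`, `7`. Grade the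
ring so that `xᵃ + yᵇ + zᶜ` is homogeneous, and let `E` be the Euler derivation, which multiplies a
homogeneous element by its degree. The images `f`, `g`, `h` of `x`, `y`, `z` under an automorphism
satisfy `fᵃ + gᵇ + hᶜ = 0`; differentiating this relation and comparing degrees as in the
Mason-Stothers theorem shows that `(f, g, h)` and `(a E f, b E g, c E h)` are parallel, so that `f`,
`g`, `h` are eigenvectors of `E`, with eigenvalues `k bc`, `k ac`, `k ab` for some natural number
`k`. Hence the automorphism rescales `E` by `k`. The same holds for its inverse, so `k = 1` and the
automorphism preserves the grading. Each of `x`, `y`, `z` spans its graded piece, since by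
coprimality no other monomial has the same weight.
-/

open scoped Polynomial

section RegularPair

/-- `(f, g)` is a regular pair when `g` is a nonzerodivisor modulo `f`. This is the form of
coprimality needed outside unique factorization domains; unlike in a regular sequence, `f` and `g`
may generate the unit ideal. -/
def IsRegularPair {M : Type*} [Semigroup M] (f g : M) : Prop :=
  ∀ ⦃t : M⦄, f ∣ g * t → f ∣ t

theorem isRegularPair_of_prime {M : Type*} [CommMonoidWithZero M] {p q : M} (hp : Prime p)
    (hpq : ¬p ∣ q) : IsRegularPair p q :=
  fun _ ht ↦ (hp.dvd_or_dvd ht).resolve_left hpq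

namespace IsRegularPair

theorem symm {M : Type*} [CommMonoidWithZero M] [IsCancelMulZero M] {f g : M}
    (h : IsRegularPair f g) (hf : f ≠ 0) : IsRegularPair g f := by
  rintro t ⟨s, hs⟩
  obtain ⟨s', rfl⟩ := h ⟨t, hs.symm⟩
  exact ⟨s', mul_left_cancel₀ hf (hs.trans (mul_left_comm g f s'))⟩

theorem pow_right {M : Type*} [Monoid M] {f g : M} (h : IsRegularPair f g) (n : ℕ) :
    IsRegularPair f (g ^ n) := by
  induction n with
  | zero => exact fun t ht ↦ by simpa only [pow_zero, one_mul] using ht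
  | succ n ih => exact fun t ht ↦ h (ih (by rwa [pow_succ, mul_assoc] at ht))

theorem pow {M : Type*} [CommMonoidWithZero M] [IsCancelMulZero M] {f g : M}
    (h : IsRegularPair f g) (hf : f ≠ 0) (hg : g ≠ 0) (m n : ℕ) :
    IsRegularPair (f ^ m) (g ^ n) :=
  (((h.pow_right n).symm hf).pow_right m).symm (pow_ne_zero n hg)

theorem map {M N E : Type*} [Semigroup M] [Semigroup N] [EquivLike E M N] [MulEquivClass E M N]
    {f g : M} (h : IsRegularPair f g) (e : E) : IsRegularPair (e f) (e g) := by
  intro t ht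
  obtain ⟨s, rfl⟩ := EquivLike.surjective e t
  rw [← map_mul, map_dvd_iff] at ht
  exact map_dvd e (h ht)

theorem quotientMk {A : Type*} [CommRing A] {p q F : A} (hpq : IsRegularPair p q)
    (hprime : (Ideal.span {p, q}).IsPrime) (hF : F ∉ Ideal.span {p, q}) :
    IsRegularPair (Ideal.Quotient.mk (Ideal.span {F}) p)
      (Ideal.Quotient.mk (Ideal.span {F}) q) := by
  rintro t ⟨u, hu⟩
  obtain ⟨T, rfl⟩ := Ideal.Quotient.mk_surjective t
  obtain ⟨U, rfl⟩ := Ideal.Quotient.mk_surjective u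
  rw [← map_mul, ← map_mul, Ideal.Quotient.eq, Ideal.mem_span_singleton] at hu
  obtain ⟨Q, hQ⟩ := hu
  have hFQ : F * Q ∈ Ideal.span {p, q} :=
    Ideal.mem_span_pair.2 ⟨-U, T, by linear_combination hQ⟩
  obtain ⟨r, s, hrs⟩ := Ideal.mem_span_pair.1 ((hprime.mem_or_mem hFQ).resolve_left hF)
  obtain ⟨V, hV⟩ : p ∣ T - F * s :=
    hpq ⟨U + F * r, by linear_combination hQ - F * hrs⟩
  refine ⟨Ideal.Quotient.mk _ V, ?_⟩
  rw [← map_mul, Ideal.Quotient.eq, Ideal.mem_span_singleton]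
  exact ⟨s, by linear_combination hV⟩

end IsRegularPair

end RegularPair

section Derivation

theorem dvd_derivation_of_sq_dvd {A R : Type*} [CommRing A] [CommRing R] [Algebra A R]
    (D : Derivation A R R) {p f : R} (h : p ^ 2 ∣ f) : p ∣ D f := by
  obtain ⟨q, rfl⟩ := h
  rw [D.leibniz, D.leibniz_pow]
  exact ⟨p * D q + 2 * q * D p, by simp only [smul_eq_mul, nsmul_eq_mul]; push_cast; ring⟩

/- Both `(f, g, h)` and `(a Df, b Dg, c Dh)` are orthogonal to `(f ^ (a-1), g ^ (b-1), h ^ (c-1))`,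
which is therefore parallel to their cross product; since it has no common factor in a regular
pair of entries, the cross product is a multiple of it. -/
theorem exists_cross_derivation_eq_mul_pow {A R : Type*} [CommRing A] [CommRing R] [IsDomain R]
    [Algebra A R] (D : Derivation A R R) {f g h : R} {a b c : ℕ}
    (ha : a ≠ 0) (hb : b ≠ 0) (hc : c ≠ 0) (hrel : f ^ a + g ^ b + h ^ c = 0)
    (hf : f ≠ 0) (hg : g ≠ 0) (hfg : IsRegularPair f g) :
    ∃ m, g * (c * D h) - h * (b * D g) = m * f ^ (a - 1) ∧
      h * (a * D f) - f * (c * D h) = m * g ^ (b - 1) ∧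
      f * (b * D g) - g * (a * D f) = m * h ^ (c - 1) := by
  have hDrel : f ^ (a - 1) * (a * D f) + g ^ (b - 1) * (b * D g) + h ^ (c - 1) * (c * D h) = 0 := by
    have := congrArg D hrel
    simp only [map_add, D.leibniz_pow, nsmul_eq_mul, smul_eq_mul, map_zero] at this
    linear_combination this
  rw [← mul_pow_sub_one ha, ← mul_pow_sub_one hb, ← mul_pow_sub_one hc] at hrel
  have hf' := pow_ne_zero (a - 1) hf
  obtain ⟨m, hm⟩ : f ^ (a - 1) ∣ g * (c * D h) - h * (b * D g) :=
    hfg.pow hf hg (a - 1) (b - 1)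
      ⟨h * (a * D f) - f * (c * D h), by linear_combination c * D h * hrel - h * hDrel⟩
  refine ⟨m, by rw [hm, mul_comm], mul_right_cancel₀ hf' ?_, mul_right_cancel₀ hf' ?_⟩
  · linear_combination h * hDrel - c * D h * hrel + g ^ (b - 1) * hm
  · linear_combination b * D g * hrel - g * hDrel + h ^ (c - 1) * hm

end Derivation

section Exponents

theorem exists_eq_mul_of_mul_eq_mul {a b c p q r : ℕ} (hab : a.Coprime b) (hac : a.Coprime c)
    (hbc : b.Coprime c) (hb : b ≠ 0) (hc : c ≠ 0) (hpq : a * p = b * q) (hpr : a * p = c * r) :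
    ∃ k, p = k * (b * c) ∧ q = k * (a * c) ∧ r = k * (a * b) := by
  have hbp : b ∣ p := hab.symm.dvd_of_dvd_mul_left ⟨q, hpq⟩
  have hcp : c ∣ p := hac.symm.dvd_of_dvd_mul_left ⟨r, hpr⟩
  obtain ⟨k, rfl⟩ := hbc.mul_dvd_of_dvd_of_dvd hbp hcp
  exact ⟨k, by ring, mul_left_cancel₀ hb (by linear_combination -hpq),
    mul_left_cancel₀ hc (by linear_combination -hpr)⟩

theorem eq_one_of_weighted_sum_eq {a b c i j l : ℕ} (hab : a.Coprime b) (hac : a.Coprime c)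
    (ha : 1 < a) (hb : b ≠ 0) (hc : c ≠ 0)
    (h : i * (b * c) + j * (a * c) + l * (a * b) = b * c) : i = 1 ∧ j = 0 ∧ l = 0 := by
  have hbc : 0 < b * c := by positivity
  have hi : i ≠ 0 := by
    rintro rfl
    have hdvd : a ∣ b * c := ⟨j * c + l * b, by linarith⟩
    exact ha.ne' ((hab.mul_right hac).eq_one_of_dvd hdvd)
  have hi1 : i ≤ 1 := Nat.le_of_mul_le_mul_right (by lia) hbc
  obtain rfl : i = 1 := by lia
  have hjl : j * (a * c) + l * (a * b) = 0 := by lia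
  simpa [Nat.ne_zero_of_lt ha, hb, hc] using hjl

theorem ne_zero_of_sum_mul_lt_mul {a b c : ℕ} (habc : b * c + a * c + a * b < a * b * c) :
    a ≠ 0 ∧ b ≠ 0 ∧ c ≠ 0 := by
  refine ⟨?_, ?_, ?_⟩ <;> rintro rfl <;> simp at habc

theorem one_lt_of_sum_mul_lt_mul {a b c : ℕ} (habc : b * c + a * c + a * b < a * b * c) :
    1 < a ∧ 1 < b ∧ 1 < c := by
  refine ⟨?_, ?_, ?_⟩ <;> by_contra! h
  · interval_cases a <;> lia
  · interval_cases b <;> lia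
  · interval_cases c <;> lia

end Exponents

section WeightGrading

/-- An `ℕ`-grading of the `K`-algebra `R` in which the algebra generators `v i` are homogeneous of
degree `w i`. It is encoded by its coaction `R → R[T]`, which sends a homogeneous `r` of degree `n`
to `r Tⁿ`. -/
structure WeightGrading (K : Type*) {σ R : Type*} [CommRing K] [CommRing R] [Algebra K R]
    (v : σ → R) (w : σ → ℕ) where
  /-- The `K`-algebra homomorphism sending a homogeneous `r` of degree `n` to `r Tⁿ`. -/
  coaction : R →ₐ[K] R[X]
  coaction_gen (i : σ) : coaction (v i) = Polynomial.C (v i) * Polynomial.X ^ w i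
  adjoin_range : Algebra.adjoin K (Set.range v) = ⊤

theorem aeval_C_mul_X_pow_monomial {K σ R : Type*} [CommRing K] [CommRing R] [Algebra K R]
    (v : σ → R) (w : σ → ℕ) (u : σ →₀ ℕ) (r : K) :
    aeval (fun i ↦ Polynomial.C (v i) * Polynomial.X ^ w i) (monomial u r) =
      Polynomial.C (aeval v (monomial u r)) * Polynomial.X ^ Finsupp.weight w u := by
  simp only [aeval_monomial, mul_pow, ← pow_mul, Finsupp.prod, Finsupp.weight_apply, Finsupp.sum,
    Finset.prod_mul_distrib, Finset.prod_pow_eq_pow_sum, smul_eq_mul, mul_comm (w _), map_mul,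
    map_prod, map_pow, Polynomial.algebraMap_apply, mul_assoc]

theorem aeval_C_mul_X_pow_of_isWeightedHomogeneous {K σ R : Type*} [CommRing K]
    [CommRing R] [Algebra K R] (v : σ → R) {w : σ → ℕ} {F : MvPolynomial σ K} {n : ℕ}
    (hF : IsWeightedHomogeneous w F n) :
    aeval (fun i ↦ Polynomial.C (v i) * Polynomial.X ^ w i) F =
      Polynomial.C (aeval v F) * Polynomial.X ^ n := by
  conv_lhs => rw [F.as_sum]
  conv_rhs => rw [F.as_sum]
  simp only [map_sum, Finset.sum_mul]
  refine Finset.sum_congr rfl fun u hu ↦ ?_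
  rw [aeval_C_mul_X_pow_monomial, hF (mem_support_iff.1 hu)]

theorem aeval_quotientMk_X {K σ : Type*} [CommRing K] (I : Ideal (MvPolynomial σ K))
    (p : MvPolynomial σ K) :
    aeval (fun i ↦ Ideal.Quotient.mk I (X i)) p = Ideal.Quotient.mk I p :=
  (comp_aeval_apply X (Ideal.Quotient.mkₐ K I) p).symm.trans
    (congrArg (Ideal.Quotient.mk I) (aeval_X_left_apply p))

namespace WeightGrading

section CommRing

variable {K σ R : Type*} [CommRing K] [CommRing R] [Algebra K R] {v : σ → R} {w : σ → ℕ}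
  (γ : WeightGrading K v w)

@[simp]
theorem eval_one_coaction (r : R) : (γ.coaction r).eval 1 = r := by
  have h : ((Polynomial.aeval (1 : R)).restrictScalars K).comp γ.coaction = AlgHom.id K R := by
    refine AlgHom.ext_of_adjoin_eq_top γ.adjoin_range ?_
    rintro _ ⟨i, rfl⟩
    simp [γ.coaction_gen]
  simpa [Polynomial.aeval_def, Polynomial.eval₂_id] using DFunLike.congr_fun h r

theorem coaction_injective : Function.Injective γ.coaction :=
  Function.LeftInverse.injective γ.eval_one_coaction

theorem coaction_ne_zero {r : R} (hr : r ≠ 0) : γ.coaction r ≠ 0 :=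
  (map_ne_zero_iff _ γ.coaction_injective).2 hr

/-- The Euler derivation, multiplying a homogeneous element by its degree; it is the derivative of
the coaction at `T = 1`. -/
noncomputable def euler : Derivation K R R :=
  Derivation.mk'
    (((Polynomial.aeval (1 : R)).toLinearMap.restrictScalars K) ∘ₗ
      (Polynomial.derivative.restrictScalars K) ∘ₗ γ.coaction.toLinearMap)
    fun r s ↦ by simp; ring

theorem euler_apply (r : R) : γ.euler r = (γ.coaction r).derivative.eval 1 := by
  simp [euler]

theorem euler_gen (i : σ) : γ.euler (v i) = w i * v i := by
  rw [euler_apply, coaction_gen, Polynomial.derivative_C_mul_X_pow]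
  simp [mul_comm]

theorem coaction_euler (r : R) :
    γ.coaction (γ.euler r) = Polynomial.X * (γ.coaction r).derivative := by
  have hr : r ∈ Algebra.adjoin K (Set.range v) := γ.adjoin_range ▸ Algebra.mem_top
  induction hr using Algebra.adjoin_induction with
  | mem r hr =>
    obtain ⟨i, rfl⟩ := hr
    rw [euler_gen, map_mul, map_natCast, coaction_gen, Polynomial.derivative_C_mul_X_pow]
    rcases w i with _ | n
    · simp
    · simp only [map_mul, map_natCast, add_tsub_cancel_right]; ring
  | algebraMap a => simp [Polynomial.algebraMap_apply]
  | add r s _ _ hr hs => simp only [map_add, hr, hs, mul_add]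
  | mul r s _ _ hr hs =>
    simp only [Derivation.leibniz, smul_eq_mul, map_add, map_mul, hr, hs, Polynomial.derivative_mul]
    ring

theorem coeff_coaction_euler (r : R) (n : ℕ) :
    (γ.coaction (γ.euler r)).coeff n = n * (γ.coaction r).coeff n := by
  rw [coaction_euler]
  rcases n with _ | n
  · simp
  · rw [Polynomial.coeff_X_mul, Polynomial.coeff_derivative, mul_comm, Nat.cast_add_one]

theorem euler_algEquiv_eq_mul {φ : R ≃ₐ[K] R} {k : ℕ}
    (h : ∀ i, γ.euler (φ (v i)) = (k * w i : ℕ) * φ (v i)) (r : R) :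
    γ.euler (φ r) = k * φ (γ.euler r) := by
  have hr : r ∈ Algebra.adjoin K (Set.range v) := γ.adjoin_range ▸ Algebra.mem_top
  induction hr using Algebra.adjoin_induction with
  | mem r hr =>
    obtain ⟨i, rfl⟩ := hr
    rw [h, euler_gen, map_mul, map_natCast, Nat.cast_mul, mul_assoc]
  | algebraMap a => simp
  | add r s _ _ hr hs => simp only [map_add, hr, hs, mul_add]
  | mul r s _ _ hr hs =>
    simp only [Derivation.leibniz, smul_eq_mul, map_add, map_mul, hr, hs]
    ring

/-- The largest degree of a homogeneous component of `r`, with value `0` at `r = 0`. -/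
noncomputable def degree (r : R) : ℕ := (γ.coaction r).natDegree

theorem degree_euler_le (r : R) : γ.degree (γ.euler r) ≤ γ.degree r := by
  refine Polynomial.natDegree_le_iff_coeff_eq_zero.2 fun n hn ↦ ?_
  rw [coeff_coaction_euler, Polynomial.coeff_eq_zero_of_natDegree_lt hn, mul_zero]

theorem degree_sub_le (r s : R) : γ.degree (r - s) ≤ max (γ.degree r) (γ.degree s) := by
  simpa only [degree, map_sub] using Polynomial.natDegree_sub_le _ _

theorem degree_mul_le (r s : R) : γ.degree (r * s) ≤ γ.degree r + γ.degree s := by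
  simpa only [degree, map_mul] using Polynomial.natDegree_mul_le

theorem degree_natCast_mul_le (n : ℕ) (r : R) : γ.degree (n * r) ≤ γ.degree r := by
  simpa [degree] using Polynomial.natDegree_mul_le (p := (n : R[X])) (q := γ.coaction r)

theorem degree_cross_le (f g : R) (m n : ℕ) :
    γ.degree (f * (m * γ.euler g) - g * (n * γ.euler f)) ≤ γ.degree f + γ.degree g := by
  have h (f g : R) (m : ℕ) : γ.degree (f * (m * γ.euler g)) ≤ γ.degree f + γ.degree g :=
    (γ.degree_mul_le _ _).trans <| Nat.add_le_add_left
      ((γ.degree_natCast_mul_le _ _).trans (γ.degree_euler_le g)) _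
  exact (γ.degree_sub_le _ _).trans (max_le (h f g m) ((h g f n).trans_eq (Nat.add_comm _ _)))

theorem euler_eq_zero_of_degree_eq_zero {r : R} (hr : γ.degree r = 0) : γ.euler r = 0 := by
  rw [euler_apply, Polynomial.derivative_of_natDegree_zero hr, Polynomial.eval_zero]

theorem coaction_eq_C_of_degree_eq_zero {r : R} (hr : γ.degree r = 0) :
    γ.coaction r = Polynomial.C r := by
  have h := Polynomial.eq_C_of_natDegree_eq_zero hr
  have hr' := γ.eval_one_coaction r
  rw [h, Polynomial.eval_C] at hr'
  rw [h, hr']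

theorem coaction_aeval_monomial (u : σ →₀ ℕ) (a : K) :
    γ.coaction (aeval v (monomial u a)) =
      Polynomial.C (aeval v (monomial u a)) * Polynomial.X ^ Finsupp.weight w u := by
  rw [← aeval_C_mul_X_pow_monomial, ← funext γ.coaction_gen, ← comp_aeval_apply]

theorem exists_coeff_coaction_eq_mul_gen {i : σ}
    (hi : ∀ u, Finsupp.weight w u = w i → u = Finsupp.single i 1) (r : R) :
    ∃ a : K, (γ.coaction r).coeff (w i) = algebraMap K R a * v i := by
  obtain ⟨p, rfl⟩ : ∃ p, aeval v p = r := by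
    simpa [Algebra.adjoin_range_eq_range_aeval] using
      (γ.adjoin_range ▸ Algebra.mem_top : r ∈ Algebra.adjoin K (Set.range v))
  induction p using MvPolynomial.induction_on' with
  | add p q hp hq =>
    obtain ⟨a, ha⟩ := hp
    obtain ⟨b, hb⟩ := hq
    exact ⟨a + b, by simp only [map_add, Polynomial.coeff_add, ha, hb, add_mul]⟩
  | monomial u a =>
    rw [coaction_aeval_monomial, Polynomial.coeff_C_mul_X_pow]
    split_ifs with hu
    · exact ⟨a, by rw [hi u hu.symm]; simp [aeval_monomial]⟩
    · exact ⟨0, by simp⟩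

end CommRing

section IsDomain

variable {K σ R : Type*} [CommRing K] [CommRing R] [IsDomain R] [Algebra K R] {v : σ → R}
  {w : σ → ℕ} (γ : WeightGrading K v w)

theorem degree_mul {r s : R} (hr : r ≠ 0) (hs : s ≠ 0) :
    γ.degree (r * s) = γ.degree r + γ.degree s := by
  rw [degree, map_mul, Polynomial.natDegree_mul (γ.coaction_ne_zero hr) (γ.coaction_ne_zero hs)]
  rfl

theorem degree_pow (r : R) (n : ℕ) : γ.degree (r ^ n) = n * γ.degree r := by
  rw [degree, map_pow, Polynomial.natDegree_pow]
  rfl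

/- If the multiplier `m` of `exists_cross_derivation_eq_mul_pow` were nonzero, comparing degrees
would give `a deg f, b deg g, c deg h ≤ deg f + deg g + deg h`, hence
`deg f + deg g + deg h ≤ (1/a + 1/b + 1/c) (deg f + deg g + deg h)`, as in the proof of the
Mason-Stothers theorem. -/
theorem cross_euler_eq_zero {f g h : R} {a b c : ℕ} (habc : b * c + a * c + a * b < a * b * c)
    (hrel : f ^ a + g ^ b + h ^ c = 0) (hf : f ≠ 0) (hg : g ≠ 0) (hh : h ≠ 0)
    (hfg : IsRegularPair f g) (hdeg : γ.degree f + γ.degree g + γ.degree h ≠ 0) :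
    h * (a * γ.euler f) = f * (c * γ.euler h) ∧ f * (b * γ.euler g) = g * (a * γ.euler f) := by
  obtain ⟨ha, hb, hc⟩ := ne_zero_of_sum_mul_lt_mul habc
  obtain ⟨m, hmf, hmg, hmh⟩ := exists_cross_derivation_eq_mul_pow γ.euler ha hb hc hrel hf hg hfg
  obtain rfl | hm := eq_or_ne m 0
  · exact ⟨sub_eq_zero.1 (by rw [hmg, zero_mul]), sub_eq_zero.1 (by rw [hmh, zero_mul])⟩
  have hbound {r t : R} {n d : ℕ} (hn : n ≠ 0) (hr : r ≠ 0) (ht : t = m * r ^ (n - 1))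
      (htd : γ.degree t ≤ d) : n * γ.degree r ≤ γ.degree r + d := by
    rw [ht, γ.degree_mul hm (pow_ne_zero _ hr), γ.degree_pow] at htd
    obtain ⟨n, rfl⟩ := Nat.exists_eq_succ_of_ne_zero hn
    rw [Nat.succ_sub_one] at htd
    lia
  have hf' := hbound ha hf hmf (γ.degree_cross_le g h c b)
  have hg' := hbound hb hg hmg (γ.degree_cross_le h f a c)
  have hh' := hbound hc hh hmh (γ.degree_cross_le f g b a)
  refine absurd ?_ hdeg
  by_contra hpos
  nlinarith [Nat.mul_le_mul_left (b * c) hf', Nat.mul_le_mul_left (a * c) hg',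
    Nat.mul_le_mul_left (a * b) hh', Nat.mul_lt_mul_of_pos_right habc (Nat.pos_of_ne_zero hpos)]

variable [CharZero R]

theorem coaction_eq_of_euler_eq {r : R} {n : ℕ} (h : γ.euler r = n * r) :
    γ.coaction r = Polynomial.C r * Polynomial.X ^ n := by
  have hmon : γ.coaction r = Polynomial.C ((γ.coaction r).coeff n) * Polynomial.X ^ n := by
    ext j
    rw [Polynomial.coeff_C_mul_X_pow]
    split_ifs with hj
    · rw [hj]
    · have hcoeff := γ.coeff_coaction_euler r j
      rw [h, map_mul, map_natCast, Polynomial.coeff_natCast_mul] at hcoeff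
      by_contra h0
      exact hj (Nat.cast_injective (mul_right_cancel₀ h0 hcoeff)).symm
  have heval := γ.eval_one_coaction r
  rw [hmon, Polynomial.eval_C_mul, Polynomial.eval_X_pow, one_pow, mul_one] at heval
  rwa [heval] at hmon

theorem euler_eq_degree_mul_of_dvd {r : R} {n : ℕ} (hn : n ≠ 0) (h : r ∣ n * γ.euler r) :
    γ.euler r = γ.degree r * r := by
  obtain rfl | hr := eq_or_ne r 0
  · simp
  obtain ⟨s, hs⟩ := h
  have hdeg : γ.degree s = 0 := by
    obtain rfl | hs0 := eq_or_ne s 0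
    · simp [degree]
    · have := (γ.degree_natCast_mul_le n (γ.euler r)).trans (γ.degree_euler_le r)
      rw [hs, γ.degree_mul hr hs0] at this
      lia
  have hlead : (γ.coaction r).coeff (γ.degree r) ≠ 0 :=
    Polynomial.leadingCoeff_ne_zero.2 (γ.coaction_ne_zero hr)
  have hs' : s = n * γ.degree r := by
    have := congrArg (fun t ↦ (γ.coaction t).coeff (γ.degree r)) hs
    simp only [map_mul, map_natCast, Polynomial.coeff_natCast_mul, coeff_coaction_euler,
      γ.coaction_eq_C_of_degree_eq_zero hdeg, Polynomial.coeff_mul_C] at this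
    exact mul_left_cancel₀ hlead (by linear_combination -this)
  have hn' : (n : R) ≠ 0 := Nat.cast_ne_zero.2 hn
  exact mul_left_cancel₀ hn' (by rw [hs, hs']; ring)

theorem euler_eq_degree_mul_of_cross_eq_zero {f g : R} {a b : ℕ} (ha : a ≠ 0) (hb : b ≠ 0)
    (hf : f ≠ 0) (hg : g ≠ 0) (hfg : IsRegularPair f g)
    (h : f * (b * γ.euler g) = g * (a * γ.euler f)) :
    γ.euler f = γ.degree f * f ∧ γ.euler g = γ.degree g * g ∧ a * γ.degree f = b * γ.degree g := by
  have hEf := γ.euler_eq_degree_mul_of_dvd ha (hfg ⟨_, h.symm⟩)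
  have hEg := γ.euler_eq_degree_mul_of_dvd hb (hfg.symm hf ⟨_, h⟩)
  refine ⟨hEf, hEg, Nat.cast_injective (R := R) (mul_right_cancel₀ (mul_ne_zero hf hg) ?_)⟩
  rw [hEf, hEg] at h
  push_cast
  linear_combination -h

end IsDomain

/-- The grading of `K[Xᵢ] / (F)` induced by the weights `w`, for `F` weighted homogeneous. -/
noncomputable def quotientMk {K σ : Type*} [CommRing K] {w : σ → ℕ} {F : MvPolynomial σ K} {n : ℕ}
    (hF : IsWeightedHomogeneous w F n) :
    WeightGrading K (fun i ↦ Ideal.Quotient.mk (Ideal.span {F}) (X i)) w where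
  coaction := Ideal.Quotient.liftₐ _ (aeval fun i ↦
      Polynomial.C (Ideal.Quotient.mk (Ideal.span {F}) (X i)) * Polynomial.X ^ w i) <| by
    intro p hp
    obtain ⟨q, rfl⟩ := Ideal.mem_span_singleton.1 hp
    have hmk : aeval (fun i ↦ Ideal.Quotient.mk (Ideal.span {F}) (X i)) F = 0 :=
      (aeval_quotientMk_X _ F).trans
        (Ideal.Quotient.eq_zero_iff_mem.2 (Ideal.mem_span_singleton_self F))
    rw [map_mul, aeval_C_mul_X_pow_of_isWeightedHomogeneous _ hF, hmk, map_zero, zero_mul, zero_mul]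
  coaction_gen i := aeval_X _ i
  adjoin_range := by
    rw [Algebra.adjoin_range_eq_range_aeval, AlgHom.range_eq_top]
    intro r
    obtain ⟨p, rfl⟩ := Ideal.Quotient.mk_surjective r
    exact ⟨p, aeval_quotientMk_X _ p⟩

end WeightGrading

end WeightGrading

section Prime

theorem isPrime_span_X_image {σ K : Type*} [CommRing K] [IsDomain K] (s : Set σ) :
    (Ideal.span ((X : σ → MvPolynomial σ K) '' s)).IsPrime := by
  classical
  let κ : MvPolynomial σ K →ₐ[K] MvPolynomial σ K := aeval fun i ↦ if i ∈ s then 0 else X i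
  have hX {i : σ} (hi : i ∈ s) : X i ∈ Ideal.span ((X : σ → MvPolynomial σ K) '' s) :=
    Ideal.subset_span ⟨i, hi, rfl⟩
  have hκ (p : MvPolynomial σ K) : p - κ p ∈ Ideal.span (X '' s) := by
    induction p using MvPolynomial.induction_on with
    | C a => simp [κ, algebraMap_eq]
    | add p q hp hq => rw [map_add, add_sub_add_comm]; exact add_mem hp hq
    | mul_X p i hp =>
      rw [map_mul, aeval_X]
      split_ifs with hi
      · rw [mul_zero, sub_zero]; exact Ideal.mul_mem_left _ p (hX hi)
      · rw [← sub_mul]; exact Ideal.mul_mem_right _ _ hp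
  have hker : Ideal.span (X '' s) = RingHom.ker κ := by
    refine le_antisymm (Ideal.span_le.2 ?_) fun p hp ↦ ?_
    · rintro _ ⟨i, hi, rfl⟩
      simp [κ, hi]
    · simpa only [RingHom.mem_ker.1 hp, sub_zero] using hκ p
  exact hker ▸ RingHom.ker_isPrime κ

/- A repeated factor would divide the derivative in `X i`, hence `X i`, and `X i` does not divide
`X i ^ m + X j ^ n`. -/
theorem not_sq_dvd_X_pow_add_X_pow {σ K : Type*} [Field K] [CharZero K] {i j : σ} (hij : i ≠ j)
    {m : ℕ} (n : ℕ) (hm : m ≠ 0) {p : MvPolynomial σ K} (hp : Prime p) :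
    ¬p ^ 2 ∣ X i ^ m + X j ^ n := by
  intro hsq
  have hderiv : p ∣ C (m : K) * X i ^ (m - 1) := by
    simpa [pderiv_pow, pderiv_X_of_ne hij.symm] using dvd_derivation_of_sq_dvd (pderiv i) hsq
  have hunit : IsUnit (C (m : K) : MvPolynomial σ K) :=
    (isUnit_iff_ne_zero.2 (Nat.cast_ne_zero.2 hm)).map C
  have hpX : p ∣ X i := hp.dvd_of_dvd_pow (hunit.dvd_mul_left.1 hderiv)
  have hXp : X i ∣ p := (hp.associated_of_dvd X_prime hpX).symm.dvd
  have hXd : X i ∣ (X i ^ m + X j ^ n : MvPolynomial σ K) :=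
    hXp.trans ((dvd_pow_self p two_ne_zero).trans hsq)
  have hXX : X i ∣ (X j : MvPolynomial σ K) :=
    X_prime.dvd_of_dvd_pow ((dvd_add_right (dvd_pow_self _ hm)).1 hXd)
  exact hij (by simpa [X_dvd_X] using hXX)

theorem irreducible_X_pow_add_C_of_not_sq_dvd {A : Type*} [CommRing A] [IsDomain A] {n : ℕ}
    (hn : n ≠ 0) {p d : A} (hp : Prime p) (hpd : p ∣ d) (hsq : ¬p ^ 2 ∣ d) :
    Irreducible (Polynomial.X ^ n + Polynomial.C d) := by
  have hmonic := Polynomial.monic_X_pow_add_C d hn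
  have hprime : (Ideal.span {p}).IsPrime := (Ideal.span_singleton_prime hp.ne_zero).2 hp
  have heis : (Polynomial.X ^ n + Polynomial.C d).IsEisensteinAt (Ideal.span {p}) := by
    refine hmonic.isEisensteinAt_of_mem_of_notMem hprime.ne_top (fun {k} hk ↦ ?_) ?_
    · rw [Polynomial.natDegree_X_pow_add_C] at hk
      rw [Polynomial.coeff_add, Polynomial.coeff_X_pow, if_neg hk.ne, zero_add, Polynomial.coeff_C]
      split_ifs
      · exact Ideal.mem_span_singleton.2 hpd
      · exact zero_mem _
    · rwa [Ideal.span_singleton_pow, Ideal.mem_span_singleton, Polynomial.coeff_add,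
        Polynomial.coeff_X_pow, if_neg hn.symm, zero_add, Polynomial.coeff_C_zero]
  refine heis.irreducible hprime hmonic.isPrimitive ?_
  rw [Polynomial.natDegree_X_pow_add_C]
  exact Nat.pos_of_ne_zero hn

theorem prime_X_pow_add_X_pow_add_X_pow {K : Type*} [Field K] [CharZero K] {a b c : ℕ}
    (ha : a ≠ 0) (hb : b ≠ 0) (hc : c ≠ 0) :
    Prime (X 0 ^ a + X 1 ^ b + X 2 ^ c : MvPolynomial (Fin 3) K) := by
  let d : MvPolynomial (Fin 2) K := X 0 ^ b + X 1 ^ c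
  have hd : finSuccEquiv K 2 (X 0 ^ a + X 1 ^ b + X 2 ^ c) = Polynomial.X ^ a + Polynomial.C d := by
    have h1 : finSuccEquiv K 2 (X 1) = Polynomial.C (X 0) := finSuccEquiv_X_succ (j := 0)
    have h2 : finSuccEquiv K 2 (X 2) = Polynomial.C (X 1) := finSuccEquiv_X_succ (j := 1)
    simp only [d, map_add, map_pow, finSuccEquiv_X_zero, h1, h2, add_assoc]
  have hsq {p : MvPolynomial (Fin 2) K} (hp : Prime p) : ¬p ^ 2 ∣ d :=
    not_sq_dvd_X_pow_add_X_pow (by decide) c hb hp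
  have hdu : ¬IsUnit d := fun h ↦ by
    simpa [d, hb, hc] using h.map (eval (0 : Fin 2 → K))
  have hd0 : d ≠ 0 := fun h ↦ hsq (X_prime (i := 0)) (h ▸ dvd_zero _)
  obtain ⟨p, hp, hpd⟩ := WfDvdMonoid.exists_irreducible_factor hdu hd0
  rw [← irreducible_iff_prime, ← MulEquiv.irreducible_iff (finSuccEquiv K 2), hd]
  exact irreducible_X_pow_add_C_of_not_sq_dvd ha hp.prime hpd (hsq hp.prime)

end Prime

section PhamBrieskorn

/-- The coordinate ring `K[X, Y, Z] / (Xᵃ + Yᵇ + Zᶜ)` of a Pham-Brieskorn surface. -/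
noncomputable abbrev PhamBrieskorn (K : Type*) [Field K] (a b c : ℕ) : Type _ :=
  MvPolynomial (Fin 3) K ⧸ Ideal.span {(X 0 ^ a + X 1 ^ b + X 2 ^ c : MvPolynomial (Fin 3) K)}

namespace PhamBrieskorn

/-- The images of `X`, `Y`, `Z`. -/
noncomputable def gen (K : Type*) [Field K] (a b c : ℕ) (i : Fin 3) : PhamBrieskorn K a b c :=
  Ideal.Quotient.mk _ (X i)

/-- The weights of `X`, `Y`, `Z` for which `Xᵃ + Yᵇ + Zᶜ` is homogeneous, of degree `abc`. -/
def weight (a b c : ℕ) : Fin 3 → ℕ := ![b * c, a * c, a * b]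

variable {K : Type*} [Field K] {a b c : ℕ}

theorem isWeightedHomogeneous_X_pow_add_X_pow_add_X_pow (K : Type*) [Field K] (a b c : ℕ) :
    IsWeightedHomogeneous (weight a b c) (X 0 ^ a + X 1 ^ b + X 2 ^ c : MvPolynomial (Fin 3) K)
      (a * b * c) := by
  have h (i : Fin 3) (n : ℕ) (hn : n * weight a b c i = a * b * c) :
      IsWeightedHomogeneous (weight a b c) (X i ^ n : MvPolynomial (Fin 3) K) (a * b * c) :=
    hn ▸ (isWeightedHomogeneous_X K (weight a b c) i).pow n
  refine ((h 0 a ?_).add (h 1 b ?_)).add (h 2 c ?_) <;> simp [weight] <;> ring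

/-- The grading of `K[X, Y, Z] / (Xᵃ + Yᵇ + Zᶜ)` by `weight a b c`. -/
noncomputable def grading (K : Type*) [Field K] (a b c : ℕ) :
    WeightGrading K (gen K a b c) (weight a b c) :=
  WeightGrading.quotientMk (isWeightedHomogeneous_X_pow_add_X_pow_add_X_pow K a b c)

theorem gen_pow_add_gen_pow_add_gen_pow :
    gen K a b c 0 ^ a + gen K a b c 1 ^ b + gen K a b c 2 ^ c = 0 := by
  simp only [gen, ← map_pow, ← map_add]
  exact Ideal.Quotient.eq_zero_iff_mem.2 (Ideal.mem_span_singleton_self _)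

theorem X_pow_add_X_pow_add_X_pow_notMem_span_X_pair (ha : a ≠ 0) (hb : b ≠ 0) (hc : c ≠ 0)
    (i j : Fin 3) :
    (X 0 ^ a + X 1 ^ b + X 2 ^ c : MvPolynomial (Fin 3) K) ∉ Ideal.span {X i, X j} := by
  obtain ⟨k, hki, hkj⟩ : ∃ k, i ≠ k ∧ j ≠ k := by decide +revert
  have hone : eval (Pi.single k 1) (X 0 ^ a + X 1 ^ b + X 2 ^ c : MvPolynomial (Fin 3) K) = 1 := by
    fin_cases k <;> simp [ha, hb, hc]
  intro h
  obtain ⟨p, q, hpq⟩ := Ideal.mem_span_pair.1 h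
  rw [← hpq] at hone
  simp [hki, hkj] at hone

theorem isRegularPair_gen (ha : a ≠ 0) (hb : b ≠ 0) (hc : c ≠ 0) {i j : Fin 3} (hij : i ≠ j) :
    IsRegularPair (gen K a b c i) (gen K a b c j) := by
  refine (isRegularPair_of_prime X_prime ?_).quotientMk ?_
    (X_pow_add_X_pow_add_X_pow_notMem_span_X_pair ha hb hc i j)
  · rw [X_dvd_X]
    simpa using hij
  · simpa only [Set.image_pair] using isPrime_span_X_image {i, j}

variable [CharZero K]

theorem isDomain (ha : a ≠ 0) (hb : b ≠ 0) (hc : c ≠ 0) : IsDomain (PhamBrieskorn K a b c) := by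
  have hF := prime_X_pow_add_X_pow_add_X_pow (K := K) ha hb hc
  have := (Ideal.span_singleton_prime hF.ne_zero).2 hF
  exact Ideal.Quotient.isDomain _

theorem charZero (ha : a ≠ 0) (hb : b ≠ 0) (hc : c ≠ 0) : CharZero (PhamBrieskorn K a b c) :=
  have := isDomain (K := K) ha hb hc
  charZero_of_injective_algebraMap (algebraMap K _).injective

theorem gen_ne_zero (ha : a ≠ 0) (hb : b ≠ 0) (hc : c ≠ 0) (i : Fin 3) : gen K a b c i ≠ 0 := by
  intro h
  rw [gen, Ideal.Quotient.eq_zero_iff_mem, Ideal.mem_span_singleton] at h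
  have hassoc := (prime_X_pow_add_X_pow_add_X_pow ha hb hc).associated_of_dvd X_prime h
  exact X_pow_add_X_pow_add_X_pow_notMem_span_X_pair ha hb hc i i <|
    Ideal.mem_of_dvd _ hassoc.symm.dvd (Ideal.subset_span (by simp))

theorem eq_single_of_weight_eq (hab : a.Coprime b) (hac : a.Coprime c) (hbc : b.Coprime c)
    (ha : 1 < a) (hb : 1 < b) (hc : 1 < c) {i : Fin 3} {u : Fin 3 →₀ ℕ}
    (h : Finsupp.weight (weight a b c) u = weight a b c i) : u = Finsupp.single i 1 := by
  rw [Finsupp.weight_apply, Finsupp.sum_fintype _ _ (by simp), Fin.sum_univ_three] at h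
  change u 0 * (b * c) + u 1 * (a * c) + u 2 * (a * b) = _ at h
  fin_cases i
  · change _ = b * c at h
    obtain ⟨h0, h1, h2⟩ := eq_one_of_weighted_sum_eq hab hac ha (by lia) (by lia) h
    ext j; fin_cases j <;> simpa
  · change _ = a * c at h
    obtain ⟨h1, h0, h2⟩ := eq_one_of_weighted_sum_eq (i := u 1) (j := u 0) (l := u 2)
      hab.symm hbc hb (by lia) (by lia) (by linarith)
    ext j; fin_cases j <;> simpa
  · change _ = a * b at h
    obtain ⟨h2, h0, h1⟩ := eq_one_of_weighted_sum_eq (i := u 2) (j := u 0) (l := u 1)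
      hac.symm hbc.symm hc (by lia) (by lia) (by linarith)
    ext j; fin_cases j <;> simpa

theorem euler_gen_ne_zero (ha : a ≠ 0) (hb : b ≠ 0) (hc : c ≠ 0) (i : Fin 3) :
    (grading K a b c).euler (gen K a b c i) ≠ 0 := by
  have := isDomain (K := K) ha hb hc
  have := charZero (K := K) ha hb hc
  rw [WeightGrading.euler_gen]
  refine mul_ne_zero (Nat.cast_ne_zero.2 ?_) (gen_ne_zero ha hb hc i)
  fin_cases i <;> simp [weight, ha, hb, hc]

section Automorphism

variable (φ : PhamBrieskorn K a b c ≃ₐ[K] PhamBrieskorn K a b c)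

theorem sum_degree_algEquiv_gen_ne_zero (ha : a ≠ 0) (hb : b ≠ 0) (hc : c ≠ 0) :
    (grading K a b c).degree (φ (gen K a b c 0)) + (grading K a b c).degree (φ (gen K a b c 1)) +
      (grading K a b c).degree (φ (gen K a b c 2)) ≠ 0 := by
  intro h
  have hdeg (i : Fin 3) : (grading K a b c).degree (φ (gen K a b c i)) = 0 := by
    fin_cases i <;> simp only [Fin.zero_eta, Fin.mk_one, Fin.reduceFinMk] <;> lia
  have hφ := (grading K a b c).euler_algEquiv_eq_mul (φ := φ) (k := 0) fun i ↦ by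
    rw [(grading K a b c).euler_eq_zero_of_degree_eq_zero (hdeg i), zero_mul, Nat.cast_zero,
      zero_mul]
  refine euler_gen_ne_zero (K := K) ha hb hc 0 ?_
  rw [← φ.apply_symm_apply (gen K a b c 0), hφ, Nat.cast_zero, zero_mul]

theorem exists_euler_algEquiv_eq_mul (hab : a.Coprime b) (hac : a.Coprime c) (hbc : b.Coprime c)
    (habc : b * c + a * c + a * b < a * b * c) :
    ∃ k : ℕ, ∀ r, (grading K a b c).euler (φ r) = k * φ ((grading K a b c).euler r) := by
  obtain ⟨ha, hb, hc⟩ := ne_zero_of_sum_mul_lt_mul habc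
  have := isDomain (K := K) ha hb hc
  have := charZero (K := K) ha hb hc
  have hgen (i : Fin 3) : φ (gen K a b c i) ≠ 0 :=
    (map_ne_zero_iff φ φ.injective).2 (gen_ne_zero ha hb hc i)
  have hreg {i j : Fin 3} (hij : i ≠ j) :
      IsRegularPair (φ (gen K a b c i)) (φ (gen K a b c j)) :=
    (isRegularPair_gen ha hb hc hij).map φ
  have hrel : φ (gen K a b c 0) ^ a + φ (gen K a b c 1) ^ b + φ (gen K a b c 2) ^ c = 0 := by
    simp only [← map_pow, ← map_add, gen_pow_add_gen_pow_add_gen_pow, map_zero]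
  obtain ⟨hxz, hxy⟩ := (grading K a b c).cross_euler_eq_zero habc hrel (hgen 0) (hgen 1) (hgen 2)
    (hreg (by decide)) (sum_degree_algEquiv_gen_ne_zero φ ha hb hc)
  obtain ⟨h0, h1, hpq⟩ := (grading K a b c).euler_eq_degree_mul_of_cross_eq_zero ha hb
    (hgen 0) (hgen 1) (hreg (by decide)) hxy
  obtain ⟨-, h2, hpr⟩ := (grading K a b c).euler_eq_degree_mul_of_cross_eq_zero ha hc
    (hgen 0) (hgen 2) (hreg (by decide)) hxz.symm
  obtain ⟨k, hp, hq, hr⟩ := exists_eq_mul_of_mul_eq_mul hab hac hbc hb hc hpq hpr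
  refine ⟨k, (grading K a b c).euler_algEquiv_eq_mul fun i ↦ ?_⟩
  fin_cases i
  · exact h0.trans (by rw [hp]; rfl)
  · exact h1.trans (by rw [hq]; rfl)
  · exact h2.trans (by rw [hr]; rfl)

theorem euler_algEquiv (hab : a.Coprime b) (hac : a.Coprime c) (hbc : b.Coprime c)
    (habc : b * c + a * c + a * b < a * b * c) (r : PhamBrieskorn K a b c) :
    (grading K a b c).euler (φ r) = φ ((grading K a b c).euler r) := by
  obtain ⟨ha, hb, hc⟩ := ne_zero_of_sum_mul_lt_mul habc
  have := isDomain (K := K) ha hb hc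
  have := charZero (K := K) ha hb hc
  obtain ⟨k, hk⟩ := exists_euler_algEquiv_eq_mul φ hab hac hbc habc
  obtain ⟨l, hl⟩ := exists_euler_algEquiv_eq_mul φ.symm hab hac hbc habc
  have hx := euler_gen_ne_zero (K := K) ha hb hc 0
  have hkl : ((k * l : ℕ) : PhamBrieskorn K a b c) = 1 := by
    refine mul_right_cancel₀ hx ?_
    have h := hk (φ.symm (gen K a b c 0))
    rw [hl, map_mul, map_natCast, φ.apply_symm_apply, φ.apply_symm_apply] at h
    rw [one_mul, Nat.cast_mul, mul_assoc, ← h]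
  have hk1 : k = 1 := Nat.eq_one_of_mul_eq_one_right (by exact_mod_cast hkl)
  rw [hk, hk1, Nat.cast_one, one_mul]

theorem exists_algEquiv_gen_eq_mul (hab : a.Coprime b) (hac : a.Coprime c) (hbc : b.Coprime c)
    (habc : b * c + a * c + a * b < a * b * c) (i : Fin 3) :
    ∃ t : K, t ≠ 0 ∧ φ (gen K a b c i) = algebraMap K _ t * gen K a b c i := by
  obtain ⟨ha, hb, hc⟩ := ne_zero_of_sum_mul_lt_mul habc
  obtain ⟨ha', hb', hc'⟩ := one_lt_of_sum_mul_lt_mul habc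
  have := isDomain (K := K) ha hb hc
  have := charZero (K := K) ha hb hc
  have heuler : (grading K a b c).euler (φ (gen K a b c i)) =
      weight a b c i * φ (gen K a b c i) := by
    rw [euler_algEquiv φ hab hac hbc habc, WeightGrading.euler_gen, map_mul, map_natCast]
  obtain ⟨t, ht⟩ := (grading K a b c).exists_coeff_coaction_eq_mul_gen
    (fun _ ↦ eq_single_of_weight_eq hab hac hbc ha' hb' hc') (φ (gen K a b c i))
  rw [(grading K a b c).coaction_eq_of_euler_eq heuler, Polynomial.coeff_C_mul_X_pow,
    if_pos rfl] at ht
  refine ⟨t, ?_, ht⟩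
  rintro rfl
  rw [map_zero, zero_mul, EmbeddingLike.map_eq_zero_iff] at ht
  exact gen_ne_zero ha hb hc i ht

end Automorphism

end PhamBrieskorn

end PhamBrieskorn

open PhamBrieskorn in
theorem stmt16_general {K : Type*} [Field K] [CharZero K] {a b c : ℕ} (hab : a.Coprime b)
    (hac : a.Coprime c) (hbc : b.Coprime c) (habc : b * c + a * c + a * b < a * b * c)
    (φ : PhamBrieskorn K a b c ≃ₐ[K] PhamBrieskorn K a b c) :
    ∃ lam mu nu : K, lam ≠ 0 ∧ mu ≠ 0 ∧ nu ≠ 0 ∧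
      φ (gen K a b c 0) = algebraMap K _ lam * gen K a b c 0 ∧
      φ (gen K a b c 1) = algebraMap K _ mu * gen K a b c 1 ∧
      φ (gen K a b c 2) = algebraMap K _ nu * gen K a b c 2 := by
  obtain ⟨lam, hlam, hx⟩ := exists_algEquiv_gen_eq_mul φ hab hac hbc habc 0
  obtain ⟨mu, hmu, hy⟩ := exists_algEquiv_gen_eq_mul φ hab hac hbc habc 1
  obtain ⟨nu, hnu, hz⟩ := exists_algEquiv_gen_eq_mul φ hab hac hbc habc 2
  exact ⟨lam, mu, nu, hlam, hmu, hnu, hx, hy, hz⟩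

/-- Every `ℂ`-algebra automorphism of `R = ℂ[X,Y,Z]/(X² + Y³ + Z⁷)` sends `(x, y, z)` to
`(λx, μy, νz)` for some nonzero scalars `λ, μ, ν ∈ ℂ`. -/
theorem stmt16 (φ : Rring ≃ₐ[ℂ] Rring) :
    ∃ lam mu nu : ℂ, lam ≠ 0 ∧ mu ≠ 0 ∧ nu ≠ 0 ∧
      φ xx = algebraMap ℂ Rring lam * xx ∧
      φ yy = algebraMap ℂ Rring mu * yy ∧
      φ zz = algebraMap ℂ Rring nu * zz := by
  exact stmt16_general (by norm_num) (by norm_num) (by norm_num) (by norm_num) φ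
end

section
/- The ring R := ℂ[X,Y,Z]/(X² + Y³ + Z⁷) is rigid: it admits no nonzero locally nilpotent derivation, i.e. LND(R) = {0}; equivalently, its Makar-Limanov invariant is all of R. -/
open MvPolynomial

open scoped Polynomial

/-!
A locally nilpotent derivation `D` of a `ℚ`-domain `B` exponentiates to a ring homomorphism
`exp(tD) : B → B[t]` whose value at `b` is constant exactly when `D b = 0`. Let `B` be the ring of
the surface `x^p + y^q + z^r = 0` with `1/p + 1/q + 1/r ≤ 1`, and suppose `D ≠ 0`.
If `D` kills a nonzero element of the maximal ideal `(x, y, z)` of the origin, this element is a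
nonzero constant of `K[t]`, `K = Frac B`, lying in the ideal of the images of `x, y, z`. These are
then coprime solutions of the Fermat–Catalan equation in `K[t]`, so by Mason–Stothers they are
constant, `D x = D y = D z = 0`, and `D = 0`. Otherwise the kernel of `D` consists of the scalars
only, `D` has a slice and `B` is generated by one element; this is impossible because the cotangent
space at the origin is three-dimensional.
-/

section Derivation

variable {B : Type*} [CommRing B]

theorem derivation_iterate_mul (D : Derivation ℤ B B) (n : ℕ) (a b : B) :
    D^[n] (a * b) =
      ∑ ij ∈ Finset.HasAntidiagonal.antidiagonal n, n.choose ij.1 • (D^[ij.1] a * D^[ij.2] b) := by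
  induction n with
  | zero => simp
  | succ n ih =>
    rw [Finset.sum_antidiagonal_choose_succ_nsmul (fun i j => D^[i] a * D^[j] b) n,
      Function.iterate_succ_apply', ih, map_sum, ← Finset.sum_add_distrib]
    refine Finset.sum_congr rfl fun ij hij => ?_
    rw [n.choose_symm_of_eq_add (Finset.HasAntidiagonal.mem_antidiagonal.1 hij).symm, map_nsmul,
      Derivation.leibniz, nsmul_add, Function.iterate_succ_apply', Function.iterate_succ_apply',
      smul_eq_mul, smul_eq_mul, mul_comm (D^[ij.2] b)]

theorem derivation_iterate_mul_of_apply_eq_zero (D : Derivation ℤ B B) {a : B} (ha : D a = 0)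
    (n : ℕ) (b : B) : D^[n] (a * b) = a * D^[n] b :=
  have hcomm : Function.Commute D (a * ·) := fun b => by simp [ha]
  hcomm.iterate_left n b

theorem derivation_iterate_pow_of_apply_eq_one (D : Derivation ℤ B B) {r : B} (hr : D r = 1)
    (n : ℕ) : D^[n] (r ^ n) = (n.factorial : B) := by
  induction n with
  | zero => simp
  | succ n ih =>
    rw [Function.iterate_succ_apply, Derivation.leibniz_pow, hr, smul_eq_mul, mul_one,
      Nat.add_sub_cancel, nsmul_eq_mul,
      derivation_iterate_mul_of_apply_eq_zero D (D.map_natCast _), ih, Nat.factorial_succ,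
      Nat.cast_mul]

theorem derivation_eq_zero_of_adjoin_eq_top {k : Type*} [CommRing k] [Algebra k B] {s : Set B}
    (hs : Algebra.adjoin k s = ⊤) {D : Derivation ℤ B B}
    (hk : ∀ c, D (algebraMap k B c) = 0) (hD : ∀ b ∈ s, D b = 0) : D = 0 := by
  ext b
  have hb : b ∈ Algebra.adjoin k s := hs ▸ Algebra.mem_top
  induction hb using Algebra.adjoin_induction with
  | mem b hb => exact hD b hb
  | algebraMap c => exact hk c
  | add a b _ _ ha hb => rw [map_add, map_add, ha, hb]
  | mul a b _ _ ha hb => simp [ha, hb]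

theorem dvd_derivation_apply_of_sq_dvd {A : Type*} [CommRing A] [Algebra A B]
    (D : Derivation A B B) {a b : B} (h : a ^ 2 ∣ b) : a ∣ D b := by
  obtain ⟨c, rfl⟩ := h
  rw [Derivation.leibniz, Derivation.leibniz_pow]
  exact dvd_add ((dvd_pow_self a two_ne_zero).mul_right _) (by simp [mul_left_comm])

end Derivation

section Exponential

variable {B : Type*} [CommRing B] [Algebra ℚ B] {D : Derivation ℤ B B}

theorem inv_factorial_smul_derivation_iterate_mul (D : Derivation ℤ B B) (n : ℕ) (a b : B) :
    (n.factorial : ℚ)⁻¹ • D^[n] (a * b) =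
      ∑ ij ∈ Finset.HasAntidiagonal.antidiagonal n,
        ((ij.1.factorial : ℚ)⁻¹ • D^[ij.1] a) * ((ij.2.factorial : ℚ)⁻¹ • D^[ij.2] b) := by
  rw [derivation_iterate_mul, Finset.smul_sum]
  refine Finset.sum_congr rfl fun ij hij => ?_
  have hchoose : (n.factorial : ℚ)⁻¹ * n.choose ij.1 =
      (ij.1.factorial : ℚ)⁻¹ * (ij.2.factorial : ℚ)⁻¹ := by
    rw [← Finset.HasAntidiagonal.mem_antidiagonal.1 hij, Nat.cast_add_choose]
    field_simp
  rw [smul_mul_smul_comm, ← hchoose, mul_smul, Nat.cast_smul_eq_nsmul]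

namespace IsLND

theorem exists_polynomial_coeff_eq (hD : IsLND D) (b : B) :
    ∃ f : B[X], ∀ n, f.coeff n = (n.factorial : ℚ)⁻¹ • D^[n] b := by
  obtain ⟨N, hN⟩ := hD b
  refine ⟨∑ i ∈ Finset.range N, Polynomial.monomial i ((i.factorial : ℚ)⁻¹ • D^[i] b),
    fun n => ?_⟩
  simp only [Polynomial.finsetSum_coeff, Polynomial.coeff_monomial, Finset.sum_ite_eq',
    Finset.mem_range]
  split_ifs with h
  · rfl
  · obtain ⟨m, rfl⟩ := Nat.exists_eq_add_of_le' (not_lt.1 h)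
    rw [Function.iterate_add_apply, hN, iterate_map_zero, smul_zero]

theorem exists_ringHom_coeff_eq (hD : IsLND D) :
    ∃ φ : B →+* B[X], ∀ b n, (φ b).coeff n = (n.factorial : ℚ)⁻¹ • D^[n] b := by
  choose f hf using hD.exists_polynomial_coeff_eq
  refine ⟨{ toFun := f, map_one' := ?_, map_mul' := ?_, map_zero' := ?_, map_add' := ?_ }, hf⟩
  · ext n
    rw [hf, Polynomial.coeff_one]
    cases n with
    | zero => simp
    | succ n => simp [Function.iterate_succ_apply, iterate_map_zero]
  · intro a b
    ext n
    simp only [Polynomial.coeff_mul, hf, inv_factorial_smul_derivation_iterate_mul]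
  · ext n
    rw [hf, iterate_map_zero, smul_zero, Polynomial.coeff_zero]
  · intro a b
    ext n
    simp only [Polynomial.coeff_add, hf, iterate_map_add, smul_add]

/-- The exponential `b ↦ ∑ Dⁿ(b) tⁿ / n!` of a locally nilpotent derivation `D`, as a ring
homomorphism into the polynomials in `t`. -/
noncomputable def exp (hD : IsLND D) : B →+* B[X] :=
  hD.exists_ringHom_coeff_eq.choose

theorem coeff_exp (hD : IsLND D) (b : B) (n : ℕ) :
    (hD.exp b).coeff n = (n.factorial : ℚ)⁻¹ • D^[n] b :=
  hD.exists_ringHom_coeff_eq.choose_spec b n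

theorem exp_injective (hD : IsLND D) : Function.Injective hD.exp := fun a b h => by
  simpa [coeff_exp] using congrArg (Polynomial.coeff · 0) h

theorem exp_eq_C_of_apply_eq_zero (hD : IsLND D) {a : B} (ha : D a = 0) :
    hD.exp a = Polynomial.C a := by
  ext n
  rw [coeff_exp, Polynomial.coeff_C]
  cases n with
  | zero => simp
  | succ n => simp [Function.iterate_succ_apply, ha, iterate_map_zero]

theorem apply_eq_zero_of_natDegree_exp_eq_zero (hD : IsLND D) {b : B}
    (hb : (hD.exp b).natDegree = 0) : D b = 0 := by
  simpa [coeff_exp] using Polynomial.coeff_eq_zero_of_natDegree_lt (hb.trans_lt one_pos)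

theorem apply_eq_zero_of_isUnit [IsDomain B] (hD : IsLND D) {u : B} (hu : IsUnit u) : D u = 0 :=
  hD.apply_eq_zero_of_natDegree_exp_eq_zero
    (Polynomial.natDegree_eq_zero_of_isUnit (hu.map hD.exp))

theorem apply_algebraMap_eq_zero {k : Type*} [Field k] [IsDomain B] [Algebra k B] (hD : IsLND D)
    (c : k) : D (algebraMap k B c) = 0 := by
  obtain rfl | hc := eq_or_ne c 0
  · simp
  · exact hD.apply_eq_zero_of_isUnit (hc.isUnit.map _)

end IsLND

end Exponential

section Slice

variable {B : Type*} [CommRing B] {D : Derivation ℤ B B}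

theorem IsLND.exists_local_slice (hD : IsLND D) (hne : D ≠ 0) : ∃ s, D s ≠ 0 ∧ D (D s) = 0 := by
  classical
  obtain ⟨b, hb⟩ : ∃ b, D b ≠ 0 := by
    by_contra! h
    exact hne (Derivation.ext h)
  have hex : ∃ n, D^[n] (D b) = 0 := hD (D b)
  obtain ⟨m, hm⟩ : ∃ m, Nat.find hex = m + 1 :=
    Nat.exists_eq_succ_of_ne_zero fun h => hb ((Nat.find_eq_zero hex).1 h)
  refine ⟨D^[m] b, ?_, ?_⟩
  · rw [← Function.iterate_succ_apply' D, Function.iterate_succ_apply]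
    exact Nat.find_min hex (by lia)
  · rw [← Function.iterate_succ_apply' D, ← Function.iterate_succ_apply' D,
      Function.iterate_succ_apply, ← hm]
    exact Nat.find_spec hex

theorem IsLND.subring_eq_top_of_slice [Algebra ℚ B] (hD : IsLND D) {r : B} (hr : D r = 1)
    (S : Subring B) (hS : ∀ a, D a = 0 → a ∈ S) (hrS : r ∈ S) : S = ⊤ := by
  refine (Subring.eq_top_iff' S).2 fun b => ?_
  obtain ⟨n, hn⟩ := hD b
  induction n generalizing b with
  | zero =>
    rw [show b = 0 from hn]
    exact S.zero_mem
  | succ n ih =>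
    set a := (n.factorial : ℚ)⁻¹ • D^[n] b with ha_def
    have ha : D a = 0 := by
      rw [map_rat_smul, ← Function.iterate_succ_apply' D, hn, smul_zero]
    have hlead : D^[n] (a * r ^ n) = D^[n] b := by
      rw [derivation_iterate_mul_of_apply_eq_zero D ha, derivation_iterate_pow_of_apply_eq_one D hr,
        mul_comm, ← nsmul_eq_mul, ha_def, ← Nat.cast_smul_eq_nsmul ℚ,
        smul_inv_smul₀ (by positivity)]
    have hsub : b - a * r ^ n ∈ S := ih _ (by rw [iterate_map_sub, hlead, sub_self])
    simpa using S.add_mem hsub (S.mul_mem (hS a ha) (S.pow_mem hrS n))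

theorem IsLND.exists_adjoin_singleton_eq_top {k : Type*} [Field k] [Algebra k B] [Algebra ℚ B]
    (hD : IsLND D) (hne : D ≠ 0) (hk : ∀ a, D a = 0 ↔ a ∈ Set.range (algebraMap k B)) :
    ∃ r : B, Algebra.adjoin k {r} = ⊤ := by
  obtain ⟨s, hs, hs2⟩ := hD.exists_local_slice hne
  obtain ⟨c, hc⟩ := (hk _).1 hs2
  have hc0 : c ≠ 0 := by
    rintro rfl
    exact hs (by rw [← hc, map_zero])
  have hslice : D (algebraMap k B c⁻¹ * s) = 1 := by
    rw [Derivation.leibniz, (hk _).2 ⟨_, rfl⟩, ← hc, smul_zero, add_zero, smul_eq_mul, ← map_mul,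
      inv_mul_cancel₀ hc0, map_one]
  refine ⟨algebraMap k B c⁻¹ * s, Algebra.toSubring_eq_top.1 ?_⟩
  refine hD.subring_eq_top_of_slice hslice _ (fun a ha => ?_)
    (Algebra.self_mem_adjoin_singleton k _)
  obtain ⟨c, rfl⟩ := (hk a).1 ha
  exact Subalgebra.algebraMap_mem _ c

theorem IsLND.exists_mem_ker_of_adjoin_singleton_ne_top {k : Type*} [Field k]
    [IsDomain B] [Algebra k B] [Algebra ℚ B] (hD : IsLND D) (hne : D ≠ 0)
    (hB : ∀ r : B, Algebra.adjoin k {r} ≠ ⊤) (ε : B →ₐ[k] k) :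
    ∃ a ≠ 0, D a = 0 ∧ ε a = 0 := by
  by_contra! hε
  obtain ⟨r, hr⟩ := hD.exists_adjoin_singleton_eq_top (k := k) hne fun a => by
    refine ⟨fun ha => ⟨ε a, ?_⟩, ?_⟩
    · by_contra h
      exact hε (a - algebraMap k B (ε a)) (sub_ne_zero.2 (Ne.symm h))
        (by rw [map_sub, ha, hD.apply_algebraMap_eq_zero, sub_zero]) (by simp)
    · rintro ⟨c, rfl⟩
      exact hD.apply_algebraMap_eq_zero c
  exact hB r hr

end Slice

section FermatCatalan

theorem isCoprime_of_pow_add_pow_add_pow_eq_zero {A : Type*} [CommRing A] {x y z : A}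
    {p q r : ℕ} (hp : p ≠ 0) (hq : q ≠ 0) (h : x ^ p + y ^ q + z ^ r = 0)
    (hxyz : Ideal.span {x, y, z} = ⊤) : IsCoprime x y := by
  rw [← Ideal.isCoprime_span_singleton_iff, Ideal.isCoprime_iff_sup_eq, ← Ideal.span_union,
    Set.singleton_union]
  by_contra hne
  obtain ⟨M, hM, hle⟩ := Ideal.exists_le_maximal _ hne
  have hx : x ∈ M := hle (Ideal.subset_span (by simp))
  have hy : y ∈ M := hle (Ideal.subset_span (by simp))
  have hz : z ∈ M := by
    refine hM.isPrime.mem_of_pow_mem r ?_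
    rw [eq_neg_of_add_eq_zero_right h]
    exact M.neg_mem (M.add_mem (M.pow_mem_of_mem hx p hp.bot_lt) (M.pow_mem_of_mem hy q hq.bot_lt))
  refine hM.ne_top (top_le_iff.1 (hxyz ▸ Ideal.span_le.2 ?_))
  simp [Set.insert_subset_iff, hx, hy, hz]

theorem IsLND.apply_eq_zero_of_pow_add_pow_add_pow_eq_zero {B : Type*} [CommRing B] [IsDomain B]
    [Algebra ℚ B] {D : Derivation ℤ B B} (hD : IsLND D) {x y z : B} {p q r : ℕ}
    (hp : p ≠ 0) (hq : q ≠ 0) (hr : r ≠ 0) (hpqr : q * r + r * p + p * q ≤ p * q * r)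
    (hx : x ≠ 0) (hy : y ≠ 0) (hz : z ≠ 0) (h : x ^ p + y ^ q + z ^ r = 0)
    (hker : ∃ a ∈ Ideal.span {x, y, z}, a ≠ 0 ∧ D a = 0) : D x = 0 ∧ D y = 0 ∧ D z = 0 := by
  have : CharZero (FractionRing B) := algebraRat.charZero _
  have hinj := IsFractionRing.injective B (FractionRing B)
  set φ : B →+* (FractionRing B)[X] :=
    (Polynomial.mapRingHom (algebraMap B (FractionRing B))).comp hD.exp
  have hφ : Function.Injective φ := (Polynomial.map_injective _ hinj).comp hD.exp_injective
  have hφ0 {b : B} (hb : b ≠ 0) : φ b ≠ 0 := (map_ne_zero_iff φ hφ).2 hb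
  have hconst {b : B} (hb : (φ b).natDegree = 0) : D b = 0 :=
    hD.apply_eq_zero_of_natDegree_exp_eq_zero <| by
      rwa [← Polynomial.natDegree_map_eq_of_injective hinj]
  have hspan : Ideal.span {φ x, φ y, φ z} = ⊤ := by
    obtain ⟨a, hmem, ha0, ha⟩ := hker
    have hunit : IsUnit (φ a) := by
      simp only [φ, RingHom.comp_apply, hD.exp_eq_C_of_apply_eq_zero ha,
        Polynomial.coe_mapRingHom, Polynomial.map_C, Polynomial.isUnit_C, isUnit_iff_ne_zero]
      exact (map_ne_zero_iff _ hinj).2 ha0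
    refine Ideal.eq_top_of_isUnit_mem _ ?_ hunit
    simpa [Ideal.map_span, Set.image_insert_eq] using Ideal.mem_map_of_mem φ hmem
  have hrel : φ x ^ p + φ y ^ q + φ z ^ r = 0 := by
    rw [← map_pow, ← map_pow, ← map_pow, ← map_add, ← map_add, h, map_zero]
  obtain ⟨hx', hy', hz'⟩ := Polynomial.flt_catalan hp hq hr hpqr
    (Nat.cast_ne_zero.2 hp) (Nat.cast_ne_zero.2 hq) (Nat.cast_ne_zero.2 hr)
    (hφ0 hx) (hφ0 hy) (hφ0 hz) (isCoprime_of_pow_add_pow_add_pow_eq_zero hp hq hrel hspan)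
    one_ne_zero one_ne_zero one_ne_zero (by simpa using hrel)
  exact ⟨hconst hx', hconst hy', hconst hz'⟩

end FermatCatalan

theorem exists_snd_eq_smul_of_adjoin_singleton_eq_top {k B M : Type*} [CommRing k] [CommRing B]
    [Algebra k B] [AddCommGroup M] [Module k M] [Module kᵐᵒᵖ M] [IsCentralScalar k M] {s : B}
    (hs : Algebra.adjoin k {s} = ⊤) (ψ : B →ₐ[k] TrivSqZeroExt k M) (b : B) :
    ∃ c : k, (ψ b).snd = c • (ψ s).snd := by
  obtain ⟨f, rfl⟩ : b ∈ (Polynomial.aeval s : k[X] →ₐ[k] B).range := by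
    rw [← Algebra.adjoin_singleton_eq_range_aeval, hs]
    exact Algebra.mem_top
  have hconst (f : k[X]) (a : k) :
      Polynomial.aeval (TrivSqZeroExt.inl a : TrivSqZeroExt k M) f =
        TrivSqZeroExt.inl (f.eval a) := by
    rw [← TrivSqZeroExt.algebraMap_eq_inl, Polynomial.aeval_algebraMap_apply,
      Polynomial.coe_aeval_eq_eval]
  refine ⟨f.derivative.eval (ψ s).fst, ?_⟩
  change (ψ (Polynomial.aeval s f)).snd = _
  rw [← Polynomial.aeval_algHom_apply]
  conv_lhs => rw [← TrivSqZeroExt.inl_fst_add_inr_snd_eq (ψ s)]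
  rw [Polynomial.aeval_add_of_sq_eq_zero _ _ _ (by rw [sq, TrivSqZeroExt.inr_mul_inr]),
    hconst, hconst]
  simp

section Irreducibility

theorem irreducible_X_pow_add_C_of_prime_dvd {A : Type*} [CommRing A] [IsDomain A] {π a : A}
    (hπ : Prime π) (h : π ∣ a) (hsq : ¬ π ^ 2 ∣ a) {n : ℕ} (hn : n ≠ 0) :
    Irreducible (Polynomial.X ^ n + Polynomial.C a) := by
  have hmonic : (Polynomial.X ^ n + Polynomial.C a).Monic := Polynomial.monic_X_pow_add_C a hn
  have hprime : (Ideal.span {π}).IsPrime := (Ideal.span_singleton_prime hπ.ne_zero).2 hπ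
  refine Polynomial.irreducible_of_eisenstein_criterion hprime ?_ (fun m hm => ?_) ?_ ?_
    hmonic.isPrimitive
  · rw [hmonic.leadingCoeff]
    exact hprime.one_notMem
  · rw [Polynomial.degree_X_pow_add_C hn.bot_lt, Nat.cast_lt] at hm
    rw [Polynomial.coeff_add, Polynomial.coeff_X_pow, if_neg hm.ne, zero_add, Polynomial.coeff_C,
      Ideal.mem_span_singleton]
    split_ifs
    exacts [h, dvd_zero π]
  · rw [Polynomial.degree_X_pow_add_C hn.bot_lt]
    exact_mod_cast hn.bot_lt
  · rw [Ideal.span_singleton_pow, Ideal.mem_span_singleton]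
    simpa [Polynomial.coeff_X_pow, hn.symm] using hsq

theorem finSuccEquiv_X_pow_add_X_pow_add_X_pow {k : Type*} [CommSemiring k] (p q r : ℕ) :
    finSuccEquiv k 2 (X 0 ^ p + X 1 ^ q + X 2 ^ r) =
      Polynomial.X ^ p + Polynomial.C (X 0 ^ q + X 1 ^ r) := by
  have h1 : finSuccEquiv k 2 (X 1) = Polynomial.C (X 0) := finSuccEquiv_X_succ (j := 0)
  have h2 : finSuccEquiv k 2 (X 2) = Polynomial.C (X 1) := finSuccEquiv_X_succ (j := 1)
  simp [h1, h2, finSuccEquiv_X_zero, add_assoc]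

variable {k : Type*} [Field k]

theorem not_sq_dvd_X_pow_add_X_pow_s17 {σ : Type*} {i j : σ} (hij : i ≠ j) {q r : ℕ}
    (hr : (r : k) ≠ 0) {π : MvPolynomial σ k} (hπ : Prime π) : ¬ π ^ 2 ∣ X i ^ q + X j ^ r := by
  intro h
  have hderiv : π ∣ C (r : k) * X j ^ (r - 1) := by
    simpa [pderiv_X_of_ne hij] using dvd_derivation_apply_of_sq_dvd (pderiv j) h
  have hj : π ∣ X j :=
    hπ.dvd_of_dvd_pow (((hr.isUnit.map C).dvd_mul_left).1 hderiv)
  have hr0 : r ≠ 0 := by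
    rintro rfl
    exact hr Nat.cast_zero
  have hi : π ∣ X i :=
    hπ.dvd_of_dvd_pow ((dvd_add_left (dvd_pow hj hr0)).1 ((dvd_pow_self π two_ne_zero).trans h))
  have hassoc : Associated π (X i) := hπ.associated_of_dvd X_prime hi
  exact hij (X_dvd_X.1 (hassoc.dvd_iff_dvd_left.1 hj))

theorem exists_prime_dvd_X_pow_add_X_pow {σ : Type*} {i j : σ} (hij : i ≠ j) {q r : ℕ}
    (hq : q ≠ 0) (hr : (r : k) ≠ 0) :
    ∃ π : MvPolynomial σ k, Prime π ∧ π ∣ X i ^ q + X j ^ r := by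
  have hne : (X i ^ q + X j ^ r : MvPolynomial σ k) ≠ 0 := fun h =>
    not_sq_dvd_X_pow_add_X_pow_s17 hij hr X_prime (h ▸ dvd_zero (X i ^ 2))
  have hr0 : r ≠ 0 := by
    rintro rfl
    exact hr Nat.cast_zero
  have hunit : ¬ IsUnit (X i ^ q + X j ^ r : MvPolynomial σ k) := fun h => by
    simpa [hq, hr0] using h.map constantCoeff
  obtain ⟨π, hπ, hdvd⟩ := WfDvdMonoid.exists_irreducible_factor hunit hne
  exact ⟨π, hπ.prime, hdvd⟩

theorem prime_X_pow_add_X_pow_add_X_pow_s17 {p q r : ℕ} (hp : p ≠ 0) (hq : q ≠ 0)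
    (hr : (r : k) ≠ 0) : Prime (X 0 ^ p + X 1 ^ q + X 2 ^ r : MvPolynomial (Fin 3) k) := by
  have h01 : (0 : Fin 2) ≠ 1 := zero_ne_one
  obtain ⟨π, hπ, hdvd⟩ := exists_prime_dvd_X_pow_add_X_pow h01 hq hr
  have hsq : ¬ π ^ 2 ∣ X 0 ^ q + X 1 ^ r := not_sq_dvd_X_pow_add_X_pow_s17 h01 hr hπ
  have hirr := irreducible_X_pow_add_C_of_prime_dvd hπ hdvd hsq hp
  rw [← finSuccEquiv_X_pow_add_X_pow_add_X_pow] at hirr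
  exact (MulEquiv.prime_iff (finSuccEquiv k 2).toMulEquiv).1 hirr.prime

end Irreducibility

/-- The Pham–Brieskorn ring `k[X,Y,Z]/(X^p + Y^q + Z^r)`. -/
abbrev PhamBrieskornRing (k : Type*) [Field k] (p q r : ℕ) : Type _ :=
  MvPolynomial (Fin 3) k ⧸ Ideal.span {(X 0 ^ p + X 1 ^ q + X 2 ^ r : MvPolynomial (Fin 3) k)}

namespace PhamBrieskornRing

variable {k : Type*} [Field k] {p q r : ℕ}

theorem isDomain (hp : p ≠ 0) (hq : q ≠ 0) (hr : (r : k) ≠ 0) :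
    IsDomain (PhamBrieskornRing k p q r) := by
  have hprime := prime_X_pow_add_X_pow_add_X_pow_s17 hp hq hr
  have := (Ideal.span_singleton_prime hprime.ne_zero).2 hprime
  exact Ideal.Quotient.isDomain _

variable (k p q r) in
/-- The three coordinate functions `x, y, z`, indexed by `Fin 3`. -/
noncomputable def coord (i : Fin 3) : PhamBrieskornRing k p q r :=
  Ideal.Quotient.mk _ (X i)

theorem coord_pow_add_coord_pow_add_coord_pow :
    coord k p q r 0 ^ p + coord k p q r 1 ^ q + coord k p q r 2 ^ r = 0 := by
  simp only [coord, ← map_pow, ← map_add]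
  exact Ideal.Quotient.eq_zero_iff_mem.2 (Ideal.mem_span_singleton_self _)

theorem adjoin_range_coord : Algebra.adjoin k (Set.range (coord k p q r)) = ⊤ := by
  have hrange : Set.range (coord k p q r) = Ideal.Quotient.mkₐ k _ '' Set.range X := by
    rw [← Set.range_comp]
    rfl
  rw [hrange, ← AlgHom.map_adjoin, adjoin_range_X, Algebra.map_top, AlgHom.range_eq_top]
  exact Ideal.Quotient.mkₐ_surjective k _

/-- The first-order Taylor expansion at the origin, which is the reduction modulo the square of
the maximal ideal `(x, y, z)`. -/
noncomputable def taylorHom (hp : 2 ≤ p) (hq : 2 ≤ q) (hr : 2 ≤ r) :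
    PhamBrieskornRing k p q r →ₐ[k] TrivSqZeroExt k (Fin 3 → k) :=
  Ideal.Quotient.liftₐ _ (aeval fun i => TrivSqZeroExt.inr (Pi.single i 1)) <| by
    have hpow {n : ℕ} (hn : 2 ≤ n) (v : Fin 3 → k) :
        (TrivSqZeroExt.inr v : TrivSqZeroExt k (Fin 3 → k)) ^ n = 0 :=
      pow_eq_zero_of_le hn (by rw [sq, TrivSqZeroExt.inr_mul_inr])
    intro a ha
    obtain ⟨b, rfl⟩ := Ideal.mem_span_singleton'.1 ha
    simp [hpow hp, hpow hq, hpow hr]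

@[simp]
theorem taylorHom_coord (hp : 2 ≤ p) (hq : 2 ≤ q) (hr : 2 ≤ r) (i : Fin 3) :
    taylorHom hp hq hr (coord k p q r i) = TrivSqZeroExt.inr (Pi.single i 1) :=
  aeval_X _ i

theorem coord_ne_zero (hp : 2 ≤ p) (hq : 2 ≤ q) (hr : 2 ≤ r) (i : Fin 3) :
    coord k p q r i ≠ 0 := fun h => by
  have hsnd := congrArg TrivSqZeroExt.snd (taylorHom_coord (k := k) hp hq hr i)
  rw [h, map_zero, TrivSqZeroExt.snd_zero, TrivSqZeroExt.snd_inr] at hsnd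
  exact one_ne_zero (Pi.single_eq_zero_iff.1 hsnd.symm)

theorem adjoin_singleton_ne_top (hp : 2 ≤ p) (hq : 2 ≤ q) (hr : 2 ≤ r)
    (s : PhamBrieskornRing k p q r) : Algebra.adjoin k {s} ≠ ⊤ := by
  intro hs
  have hline (i : Fin 3) : ∃ c : k, Pi.single i 1 = c • (taylorHom hp hq hr s).snd := by
    simpa using
      exists_snd_eq_smul_of_adjoin_singleton_eq_top hs (taylorHom hp hq hr) (coord k p q r i)
  obtain ⟨a, ha⟩ := hline 0
  obtain ⟨b, hb⟩ := hline 1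
  set v := (taylorHom hp hq hr s).snd
  have ha0 : 1 = a * v 0 := by simpa using congrFun ha 0
  have ha1 : 0 = a * v 1 := by simpa using congrFun ha 1
  have hb1 : 1 = b * v 1 := by simpa using congrFun hb 1
  exact one_ne_zero (α := k)
    (by linear_combination (b * v 1) * ha0 + hb1 - (b * v 0) * ha1)

theorem exists_algHom_ker_le_span_coord (hp : 2 ≤ p) (hq : 2 ≤ q) (hr : 2 ≤ r) :
    ∃ ε : PhamBrieskornRing k p q r →ₐ[k] k,
      ∀ b, ε b = 0 → b ∈ Ideal.span (Set.range (coord k p q r)) := by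
  set I := Ideal.span (Set.range (coord k p q r))
  set ε := (TrivSqZeroExt.fstHom k k (Fin 3 → k)).comp (taylorHom hp hq hr)
  have hε (i : Fin 3) : ε (coord k p q r i) = 0 := by simp [ε]
  have hquot : Ideal.Quotient.mkₐ k I = (Algebra.ofId k (_ ⧸ I)).comp ε := by
    refine AlgHom.ext_of_adjoin_eq_top adjoin_range_coord ?_
    rintro _ ⟨i, rfl⟩
    rw [AlgHom.comp_apply, hε, map_zero]
    exact Ideal.Quotient.eq_zero_iff_mem.2 (Ideal.subset_span ⟨i, rfl⟩)
  refine ⟨ε, fun b hb => Ideal.Quotient.eq_zero_iff_mem.1 ?_⟩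
  simpa [hb] using DFunLike.congr_fun hquot b

theorem eq_zero_of_isLND [CharZero k] (hp : 2 ≤ p) (hq : 2 ≤ q) (hr : 2 ≤ r)
    (hpqr : q * r + r * p + p * q ≤ p * q * r)
    {D : Derivation ℤ (PhamBrieskornRing k p q r) (PhamBrieskornRing k p q r)} (hD : IsLND D) :
    D = 0 := by
  have : IsDomain (PhamBrieskornRing k p q r) :=
    isDomain (by lia) (by lia) (Nat.cast_ne_zero.2 (by lia))
  by_contra hne
  obtain ⟨ε, hε⟩ := exists_algHom_ker_le_span_coord (k := k) hp hq hr
  obtain ⟨a, ha0, ha, hεa⟩ :=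
    hD.exists_mem_ker_of_adjoin_singleton_ne_top hne (adjoin_singleton_ne_top hp hq hr) ε
  have hrange : Set.range (coord k p q r) =
      {coord k p q r 0, coord k p q r 1, coord k p q r 2} := by
    ext b
    simp [Fin.exists_fin_succ, eq_comm]
  obtain ⟨hx, hy, hz⟩ := hD.apply_eq_zero_of_pow_add_pow_add_pow_eq_zero
    (by lia) (by lia) (by lia) hpqr
    (coord_ne_zero hp hq hr 0) (coord_ne_zero hp hq hr 1) (coord_ne_zero hp hq hr 2)
    coord_pow_add_coord_pow_add_coord_pow ⟨a, hrange ▸ hε a hεa, ha0, ha⟩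
  refine hne (derivation_eq_zero_of_adjoin_eq_top (adjoin_range_coord (k := k))
    hD.apply_algebraMap_eq_zero ?_)
  simp [hrange, hx, hy, hz]

end PhamBrieskornRing

theorem ML_eq_univ {B : Type} [CommRing B] (h : ∀ D : Derivation ℤ B B, IsLND D → D = 0) :
    ML B = Set.univ :=
  Set.eq_univ_of_forall fun b D hD => by rw [h D hD, Derivation.zero_apply]

theorem stmt17_general {k : Type} [Field k] [CharZero k] {p q r : ℕ}
    (hp : 2 ≤ p) (hq : 2 ≤ q) (hr : 2 ≤ r) (hpqr : q * r + r * p + p * q ≤ p * q * r) :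
    (∀ D : Derivation ℤ (PhamBrieskornRing k p q r) (PhamBrieskornRing k p q r),
      IsLND D → D = 0) ∧ ML (PhamBrieskornRing k p q r) = Set.univ :=
  have hrigid := fun D => PhamBrieskornRing.eq_zero_of_isLND (k := k) hp hq hr hpqr (D := D)
  ⟨hrigid, ML_eq_univ hrigid⟩

/-- The ring `R = ℂ[X,Y,Z]/(X² + Y³ + Z⁷)` is rigid: it admits no nonzero locally nilpotent
derivation, i.e. `LND(R) = {0}`; equivalently its Makar-Limanov invariant is all of `R`. -/
theorem stmt17 :
    (∀ D : Derivation ℤ Rring Rring, IsLND D → D = 0) ∧ ML Rring = Set.univ :=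
  stmt17_general (by norm_num) (by norm_num) (by norm_num) (by norm_num)
end
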